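/- arXiv:1602.00429 — 2 statements merged into one kernel-verified Lean document; each statement's English description precedes it below -/
import Mathlib

section
/- Let Q be a regular local ring, f₁,…,f_c a Q-regular sequence, and R = Q/(f₁,…,f_c) (a local complete intersection, hence a Gorenstein local ring). Let M and N be finitely generated R-modules with Ext^i_R(M,N) = 0 for all i > 0. Then the natural homomorphism Hom_R(M,R) ⊗_R N → Hom_R(M,N), sending φ ⊗ n to the map m ↦ φ(m)·n, is an isomorphism. -/
/-!
STATEMENT 5: Over a local complete intersection `R = Q ⧸ (f₁, …, f_c)`, if `M`, `N` are
finitely generated `R`-modules with `Ext^i_R(M, N) = 0` for all `i > 0`, then the natural map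
`Hom_R(M, R) ⊗_R N → Hom_R(M, N)`, `φ ⊗ n ↦ (m ↦ φ(m) • n)` (Mathlib's `dualTensorHom`),
is an isomorphism.
-/

open CategoryTheory CategoryTheory.Limits

universe u

/-- A Noetherian local ring is regular if its maximal ideal can be generated by
(Krull dimension of the ring) many elements. -/
def IsRegularLocal (Q : Type u) [CommRing Q] [IsLocalRing Q] : Prop :=
  IsNoetherianRing Q ∧ ∃ s : Finset Q, Ideal.span (s : Set Q) = IsLocalRing.maximalIdeal Q ∧
    (s.card : WithBot ℕ∞) = ringKrullDim Q

/-- `ExtVanish R X Y i` says that `Ext^i_R(X, Y) = 0`. -/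
def ExtVanish (R : Type u) [CommRing R] (X Y : Type u) [AddCommGroup X] [Module R X]
    [AddCommGroup Y] [Module R Y] (i : ℕ) : Prop :=
  Subsingleton (Abelian.Ext.{u} (ModuleCat.of R X) (ModuleCat.of R Y) i)

namespace ExtVanish

section LongExact

variable {R : Type u} [CommRing R] {A B C Y : Type u} [AddCommGroup A] [Module R A]
  [AddCommGroup B] [Module R B] [AddCommGroup C] [Module R C] [AddCommGroup Y] [Module R Y]

/-- The short complex in `ModuleCat R` attached to an exact pair of linear maps. -/
abbrev shortComplex {f : A →ₗ[R] B} {g : B →ₗ[R] C} (hfg : Function.Exact f g) :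
    ShortComplex (ModuleCat.{u} R) :=
  ShortComplex.mk (ModuleCat.ofHom f) (ModuleCat.ofHom g) (by
    ext x
    simpa using (hfg (f x)).2 ⟨x, rfl⟩)

lemma shortExact {f : A →ₗ[R] B} {g : B →ₗ[R] C} (hf : Function.Injective f)
    (hfg : Function.Exact f g) (hg : Function.Surjective g) :
    (shortComplex hfg).ShortExact where
  exact := (ShortComplex.ShortExact.moduleCat_exact_iff_function_exact _).2 hfg
  mono_f := (ModuleCat.mono_iff_injective _).2 hf
  epi_g := (ModuleCat.epi_iff_surjective _).2 hg

variable {f : A →ₗ[R] B} {g : B →ₗ[R] C} (hf : Function.Injective f)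
    (hfg : Function.Exact f g) (hg : Function.Surjective g)
include hf hfg hg

lemma middle {i : ℕ} (hA : ExtVanish R A Y i) (hC : ExtVanish R C Y i) :
    ExtVanish R B Y i := by
  refine subsingleton_of_forall_eq 0 fun x => ?_
  obtain ⟨y, rfl⟩ := Abelian.Ext.contravariant_sequence_exact₂ (shortExact hf hfg hg) _ x
    (@Subsingleton.elim _ hA _ _)
  rw [@Subsingleton.elim _ hC y 0, Abelian.Ext.comp_zero]

lemma left {i : ℕ} (hB : ExtVanish R B Y i) (hC : ExtVanish R C Y (i + 1)) :
    ExtVanish R A Y i := by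
  refine subsingleton_of_forall_eq 0 fun x => ?_
  obtain ⟨y, rfl⟩ := Abelian.Ext.contravariant_sequence_exact₁ (shortExact hf hfg hg) _ x
    (add_comm 1 i) (@Subsingleton.elim _ hC _ _)
  rw [@Subsingleton.elim _ hB y 0, Abelian.Ext.comp_zero]

lemma right {i : ℕ} (hA : ExtVanish R A Y i) (hB : ExtVanish R B Y (i + 1)) :
    ExtVanish R C Y (i + 1) := by
  refine subsingleton_of_forall_eq 0 fun x => ?_
  obtain ⟨y, rfl⟩ := Abelian.Ext.contravariant_sequence_exact₃ (shortExact hf hfg hg) _ x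
    (@Subsingleton.elim _ hB _ _) (add_comm 1 i)
  rw [@Subsingleton.elim _ hA y 0, Abelian.Ext.comp_zero]

/-- If `Ext^1(C, Y) = 0`, maps into `Y` extend along a monomorphism with cokernel `C`. -/
lemma exists_extension (hC : ExtVanish R C Y 1) (φ : A →ₗ[R] Y) :
    ∃ ψ : B →ₗ[R] Y, ψ ∘ₗ f = φ := by
  obtain ⟨y, hy⟩ := Abelian.Ext.contravariant_sequence_exact₁ (shortExact hf hfg hg) _
    (Abelian.Ext.mk₀ (ModuleCat.ofHom φ)) (add_zero 1) (@Subsingleton.elim _ hC _ _)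
  obtain ⟨ψ, rfl⟩ := (Abelian.Ext.mk₀_bijective _ _).2 y
  rw [Abelian.Ext.mk₀_comp_mk₀] at hy
  have := (Abelian.Ext.mk₀_bijective _ _).1 hy
  exact ⟨ψ.hom, by simpa using congrArg ModuleCat.Hom.hom this⟩

lemma one_of_exists_extension (hB : ExtVanish R B Y 1)
    (h : ∀ φ : A →ₗ[R] Y, ∃ ψ : B →ₗ[R] Y, ψ ∘ₗ f = φ) : ExtVanish R C Y 1 := by
  refine subsingleton_of_forall_eq 0 fun x => ?_
  obtain ⟨y, rfl⟩ := Abelian.Ext.contravariant_sequence_exact₃ (shortExact hf hfg hg) _ x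
    (@Subsingleton.elim _ hB _ _) (add_zero 1)
  obtain ⟨φ, rfl⟩ := (Abelian.Ext.mk₀_bijective _ _).2 y
  obtain ⟨ψ, hψ⟩ := h φ.hom
  have : φ = (shortComplex hfg).f ≫ ModuleCat.ofHom ψ := by
    ext1; simpa using hψ.symm
  rw [this, ← Abelian.Ext.mk₀_comp_mk₀]
  exact (shortExact hf hfg hg).extClass_comp_assoc _

end LongExact

variable {R : Type u} [CommRing R]

lemma of_projective (P Y : Type u) [AddCommGroup P] [Module R P] [Module.Projective R P]
    [AddCommGroup Y] [Module R Y] (i : ℕ) : ExtVanish R P Y (i + 1) :=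
  Abelian.Ext.subsingleton_of_projective _ _ _

lemma congr_left {X X' Y : Type u} [AddCommGroup X] [Module R X] [AddCommGroup X'] [Module R X']
    [AddCommGroup Y] [Module R Y] (e : X ≃ₗ[R] X') {i : ℕ} (h : ExtVanish R X Y i) :
    ExtVanish R X' Y i := by
  refine subsingleton_of_forall_eq 0 fun x => ?_
  have : x = (Abelian.Ext.mk₀ (ModuleCat.ofHom e.symm.toLinearMap)).comp
      ((Abelian.Ext.mk₀ (ModuleCat.ofHom e.toLinearMap)).comp x (zero_add i)) (zero_add i) := by
    rw [← Abelian.Ext.comp_assoc_of_second_deg_zero, Abelian.Ext.mk₀_comp_mk₀]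
    have : ModuleCat.ofHom e.symm.toLinearMap ≫ ModuleCat.ofHom e.toLinearMap = 𝟙 _ := by
      ext; simp
    rw [this, Abelian.Ext.mk₀_id_comp]
  rw [this, @Subsingleton.elim _ h ((Abelian.Ext.mk₀ _).comp x _) 0, Abelian.Ext.comp_zero]

end ExtVanish

section RegularQuotient

open TensorProduct

/-- `B` is the quotient of `A` by the ideal generated by a nonzerodivisor `f`. -/
structure IsRegularQuotient (A B : Type u) [CommRing A] [CommRing B] [Algebra A B] (f : A) :
    Prop where
  regular : IsSMulRegular A f
  surjective : Function.Surjective (algebraMap A B)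
  ker : RingHom.ker (algebraMap A B) = Ideal.span {f}

namespace IsRegularQuotient

variable {A B : Type u} [CommRing A] [CommRing B] [Algebra A B] {f : A}
  (h : IsRegularQuotient A B f)

section
variable {S G T : Type u} [AddCommGroup S] [Module A S] [AddCommGroup G] [Module A G]
  [AddCommGroup T] [Module A T]
include h

lemma exists_one_tmul (t : B ⊗[A] S) : ∃ s : S, (1 : B) ⊗ₜ[A] s = t := by
  induction t with
  | zero => exact ⟨0, by simp⟩
  | tmul b s =>
    obtain ⟨a, rfl⟩ := h.surjective b
    exact ⟨a • s, by rw [TensorProduct.tmul_smul, TensorProduct.smul_tmul',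
      Algebra.algebraMap_eq_smul_one]⟩
  | add x y hx hy =>
    obtain ⟨x, rfl⟩ := hx
    obtain ⟨y, rfl⟩ := hy
    exact ⟨x + y, TensorProduct.tmul_add _ _ _⟩

lemma exact_smul_algebraMap : Function.Exact (LinearMap.lsmul A A f) (Algebra.linearMap A B) := by
  intro a
  change a ∈ RingHom.ker (algebraMap A B) ↔ _
  rw [h.ker, Ideal.mem_span_singleton']
  simp [mul_comm f]

lemma one_tmul_eq_zero_iff (s : S) : (1 : B) ⊗ₜ[A] s = 0 ↔ ∃ s' : S, f • s' = s := by
  have := rTensor_exact S h.exact_smul_algebraMap h.surjective ((1 : A) ⊗ₜ[A] s)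
  simp only [LinearMap.rTensor_tmul, Algebra.linearMap_apply, map_one] at this
  rw [this]
  constructor
  · rintro ⟨t, ht⟩
    have := congrArg (TensorProduct.lid A S) ht
    refine ⟨TensorProduct.lid A S t, ?_⟩
    rw [TensorProduct.lid_tmul, one_smul] at this
    rw [← this]
    clear ht this
    induction t with
    | zero => simp
    | tmul a s => simp [mul_smul]
    | add x y hx hy => simp [smul_add, hx, hy]
  · rintro ⟨s', rfl⟩
    exact ⟨1 ⊗ₜ s', by simp [TensorProduct.smul_tmul']⟩

lemma smul_eq_zero [Module B T] [IsScalarTower A B T] (x : T) : f • x = 0 := by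
  have : algebraMap A B f = 0 := by
    rw [← RingHom.mem_ker, h.ker]
    exact Ideal.mem_span_singleton_self f
  rw [← algebraMap_smul B, this, zero_smul]

lemma baseChange_injective {i : S →ₗ[A] G} {p : G →ₗ[A] T} (hi : Function.Injective i)
    (hip : Function.Exact i p) (hT : IsSMulRegular T f) :
    Function.Injective (i.baseChange B) := by
  rw [injective_iff_map_eq_zero]
  intro t ht
  obtain ⟨s, rfl⟩ := h.exists_one_tmul t
  rw [LinearMap.baseChange_tmul, h.one_tmul_eq_zero_iff] at ht
  obtain ⟨g, hg⟩ := ht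
  have hpg : p g = 0 := hT.right_eq_zero_of_smul (by rw [← map_smul, hg]; exact (hip _).2 ⟨s, rfl⟩)
  obtain ⟨s', rfl⟩ := (hip g).1 hpg
  rw [h.one_tmul_eq_zero_iff]
  exact ⟨s', hi (by rw [map_smul, hg])⟩

omit h in
lemma baseChange_exact {i : S →ₗ[A] G} {p : G →ₗ[A] T} (hip : Function.Exact i p)
    (hp : Function.Surjective p) : Function.Exact (i.baseChange B) (p.baseChange B) :=
  lTensor_exact B hip hp

end

include h

/-- Change of rings: for `f` regular on `S`, the groups `Ext^i_A(S, D)` and `Ext^i_B(S / fS, D)`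
vanish simultaneously in positive degrees. -/
lemma extVanish_baseChange_iff (D : Type u) [AddCommGroup D] [Module A D] [Module B D]
    [IsScalarTower A B D] (i : ℕ) (S : Type u) [AddCommGroup S] [Module A S]
    (hS : IsSMulRegular S f) :
    ExtVanish A S D (i + 1) ↔ ExtVanish B (B ⊗[A] S) D (i + 1) := by
  induction i generalizing S with
  | zero =>
    let p := Finsupp.linearCombination A (id : S → S)
    have hp : Function.Surjective p := Finsupp.linearCombination_id_surjective A S
    have hex := LinearMap.exact_subtype_ker_map p
    have hinj := h.baseChange_injective (Submodule.injective_subtype _) hex hS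
    have hexB : Function.Exact ((LinearMap.ker p).subtype.baseChange B) (p.baseChange B) :=
      baseChange_exact (S := LinearMap.ker p) (G := S →₀ A) hex hp
    have hpB : Function.Surjective (p.baseChange B) := LinearMap.lTensor_surjective B hp
    constructor
    · intro hE
      refine ExtVanish.one_of_exists_extension hinj hexB hpB (ExtVanish.of_projective _ _ _) ?_
      intro φ
      obtain ⟨ψ, hψ⟩ := ExtVanish.exists_extension (Submodule.injective_subtype _) hex hp hE
        (φ.restrictScalars A ∘ₗ TensorProduct.mk A B _ 1)
      refine ⟨LinearMap.liftBaseChange B ψ, ?_⟩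
      ext x
      simpa using LinearMap.congr_fun hψ x
    · intro hE
      refine ExtVanish.one_of_exists_extension (Submodule.injective_subtype _) hex hp
        (ExtVanish.of_projective _ _ _) ?_
      intro φ
      obtain ⟨ψ, hψ⟩ := ExtVanish.exists_extension hinj hexB hpB hE (LinearMap.liftBaseChange B φ)
      refine ⟨ψ.restrictScalars A ∘ₗ TensorProduct.mk A B _ 1, ?_⟩
      ext x
      simpa using LinearMap.congr_fun hψ (1 ⊗ₜ x)
  | succ i ih =>
    let p := Finsupp.linearCombination A (id : S → S)
    have hp : Function.Surjective p := Finsupp.linearCombination_id_surjective A S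
    have hex := LinearMap.exact_subtype_ker_map p
    have hinj := h.baseChange_injective (Submodule.injective_subtype _) hex hS
    have hexB : Function.Exact ((LinearMap.ker p).subtype.baseChange B) (p.baseChange B) :=
      baseChange_exact (S := LinearMap.ker p) (G := S →₀ A) hex hp
    have hpB : Function.Surjective (p.baseChange B) := LinearMap.lTensor_surjective B hp
    have key := ih (LinearMap.ker p) ((IsSMulRegular.finsupp h.regular).submodule _ _)
    constructor
    · intro hE
      exact ExtVanish.right hinj hexB hpB (key.1 (ExtVanish.left (Submodule.injective_subtype _)
        hex hp (ExtVanish.of_projective _ _ _) hE)) (ExtVanish.of_projective _ _ _)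
    · intro hE
      exact ExtVanish.right (Submodule.injective_subtype _) hex hp (key.2 (ExtVanish.left hinj
        hexB hpB (ExtVanish.of_projective _ _ _) hE)) (ExtVanish.of_projective _ _ _)

end IsRegularQuotient

namespace IsRegularQuotient

variable {A B : Type u} [CommRing A] [CommRing B] [Algebra A B] {f : A}
  (h : IsRegularQuotient A B f)

include h

/-- For a `B`-module `X` with presentation `0 → S → F → X → 0` over `A`, there is an exact sequence
`0 → X → B ⊗ S → B ⊗ F → X → 0` of `B`-modules. -/
lemma exists_connecting {X F S : Type u} [AddCommGroup X] [Module A X] [Module B X]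
    [IsScalarTower A B X] [AddCommGroup F] [Module A F] [AddCommGroup S] [Module A S]
    {i : S →ₗ[A] F} {p : F →ₗ[A] X} (hi : Function.Injective i) (hip : Function.Exact i p)
    (hp : Function.Surjective p) (hF : IsSMulRegular F f) :
    ∃ c : X →ₗ[B] B ⊗[A] S, Function.Injective c ∧ Function.Exact c (i.baseChange B) := by
  have hmem : ∀ a : F, ∃ s : S, i s = f • a := fun a =>
    (hip _).1 (by rw [map_smul, h.smul_eq_zero])
  choose σ hσ using hmem
  let κ : F →ₗ[A] B ⊗[A] S := TensorProduct.mk A B S 1 ∘ₗ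
    { toFun := σ
      map_add' := fun a b => hi (by simp [hσ])
      map_smul' := fun r a => hi (by simp [hσ, smul_comm r f a]) }
  have hκ : ∀ a, κ a = 0 ↔ p a = 0 := fun a => by
    change (1 : B) ⊗ₜ[A] σ a = 0 ↔ _
    rw [h.one_tmul_eq_zero_iff, hip a]
    refine exists_congr fun s => ?_
    rw [← hi.eq_iff, hσ, map_smul, hF.eq_iff]
  have hle : LinearMap.ker p ≤ LinearMap.ker κ := fun a ha => (hκ a).2 ha
  let c' : X →ₗ[A] B ⊗[A] S := (LinearMap.ker p).liftQ κ hle ∘ₗ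
    (p.quotKerEquivOfSurjective hp).symm.toLinearMap
  have hc' : ∀ a, c' (p a) = κ a := fun a => by
    have : (p.quotKerEquivOfSurjective hp).symm (p a) = Submodule.Quotient.mk a := by
      rw [LinearEquiv.symm_apply_eq]; rfl
    change (LinearMap.ker p).liftQ κ hle ((p.quotKerEquivOfSurjective hp).symm (p a)) = κ a
    rw [this, Submodule.liftQ_apply]
  let c : X →ₗ[B] B ⊗[A] S := LinearMap.extendScalarsOfSurjective h.surjective c'
  have hc : ∀ a, c (p a) = κ a := hc'
  refine ⟨c, ?_, ?_⟩
  · rw [injective_iff_map_eq_zero]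
    intro x hx
    obtain ⟨a, rfl⟩ := hp x
    rwa [hc, hκ] at hx
  · intro t
    obtain ⟨s, rfl⟩ := h.exists_one_tmul t
    rw [LinearMap.baseChange_tmul, h.one_tmul_eq_zero_iff]
    constructor
    · rintro ⟨a, ha⟩
      refine ⟨p a, ?_⟩
      rw [hc]
      have : σ a = s := hi (by rw [hσ, ha])
      rw [← this]
      rfl
    · rintro ⟨x, hx⟩
      obtain ⟨a, rfl⟩ := hp x
      rw [hc] at hx
      have : (1 : B) ⊗ₜ[A] (s - σ a) = 0 := by
        rw [TensorProduct.tmul_sub, ← hx]; exact sub_self _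
      obtain ⟨s', hs'⟩ := (h.one_tmul_eq_zero_iff _).1 this
      refine ⟨a + i s', ?_⟩
      rw [smul_add, ← map_smul, hs', map_sub, hσ, add_sub_cancel]

lemma exact_liftBaseChange {X F S : Type u} [AddCommGroup X] [Module A X] [Module B X]
    [IsScalarTower A B X] [AddCommGroup F] [Module A F] [AddCommGroup S] [Module A S]
    {i : S →ₗ[A] F} {p : F →ₗ[A] X} (hip : Function.Exact i p) :
    Function.Exact (i.baseChange B) (LinearMap.liftBaseChange B p) := by
  intro t
  obtain ⟨a, rfl⟩ := h.exists_one_tmul t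
  rw [LinearMap.liftBaseChange_tmul, one_smul]
  constructor
  · intro ha
    obtain ⟨s, rfl⟩ := (hip a).1 ha
    exact ⟨1 ⊗ₜ s, by simp⟩
  · rintro ⟨t, ht⟩
    obtain ⟨s, rfl⟩ := h.exists_one_tmul t
    have := congrArg (LinearMap.liftBaseChange B p) ht
    simpa [(hip (i s)).2 ⟨s, rfl⟩] using this.symm

/-- Relations between `Ext^*_B(X, D)` and `Ext^*_A(X, D)` for a change of rings modulo a regular
element. -/
lemma extVanish_relations_of_presentation {X F S : Type u} (D : Type u) [AddCommGroup X]
    [Module A X] [Module B X] [IsScalarTower A B X] [AddCommGroup F] [Module A F]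
    [Module.Projective A F] [AddCommGroup S] [Module A S] [AddCommGroup D] [Module A D]
    [Module B D] [IsScalarTower A B D] {i : S →ₗ[A] F} {p : F →ₗ[A] X}
    (hi : Function.Injective i) (hip : Function.Exact i p) (hp : Function.Surjective p)
    (hF : IsSMulRegular F f) (k : ℕ) :
    (ExtVanish B X D (k + 1) → ExtVanish B X D (k + 2) → ExtVanish A X D (k + 2)) ∧
    (ExtVanish A X D (k + 3) → ExtVanish B X D (k + 1) → ExtVanish B X D (k + 3)) := by
  have hS : IsSMulRegular S f := hF.of_injective i hi
  obtain ⟨c, hc, hcj⟩ := h.exists_connecting hi hip hp hF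
  have hq := h.exact_liftBaseChange hip
  set j := i.baseChange B
  set q : B ⊗[A] F →ₗ[B] X := LinearMap.liftBaseChange B p
  have hqs : Function.Surjective q := fun x => by
    obtain ⟨a, rfl⟩ := hp x
    exact ⟨1 ⊗ₜ a, by simp [q]⟩
  have hjr : Function.Exact c j.rangeRestrict := fun t => by
    rw [← hcj t]
    exact Subtype.ext_iff
  have hjs := j.surjective_rangeRestrict
  have hqr : Function.Exact (LinearMap.range j).subtype q := fun t => by
    rw [hq t]; simp
  have hri := (LinearMap.range j).injective_subtype
  have hA : ∀ n, ExtVanish A X D (n + 2) ↔ ExtVanish B (B ⊗[A] S) D (n + 1) :=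
    fun n => by
      rw [← h.extVanish_baseChange_iff D n _ hS]
      exact ⟨fun H => ExtVanish.left hi hip hp (ExtVanish.of_projective _ _ _) H,
        fun H => ExtVanish.right hi hip hp H (ExtVanish.of_projective _ _ _)⟩
  have hE : ∀ n, ExtVanish B X D (n + 2) ↔ ExtVanish B (LinearMap.range j) D (n + 1) :=
    fun n => ⟨fun H => ExtVanish.left hri hqr hqs (ExtVanish.of_projective _ _ _) H,
        fun H => ExtVanish.right hri hqr hqs H (ExtVanish.of_projective _ _ _)⟩
  exact ⟨fun h₁ h₂ => (hA k).2 (ExtVanish.middle hc hjr hjs h₁ ((hE _).1 h₂)),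
    fun h₁ h₂ => (hE _).2 (ExtVanish.right hc hjr hjs h₂ ((hA (k + 1)).1 h₁))⟩

lemma extVanish_relations (X D : Type u) [AddCommGroup X] [Module A X] [Module B X]
    [IsScalarTower A B X] [AddCommGroup D] [Module A D] [Module B D] [IsScalarTower A B D]
    (k : ℕ) :
    (ExtVanish B X D (k + 1) → ExtVanish B X D (k + 2) → ExtVanish A X D (k + 2)) ∧
    (ExtVanish A X D (k + 3) → ExtVanish B X D (k + 1) → ExtVanish B X D (k + 3)) :=
  let p := Finsupp.linearCombination A (id : X → X)
  h.extVanish_relations_of_presentation (F := X →₀ A) (S := LinearMap.ker p) D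
    (LinearMap.ker p).injective_subtype (LinearMap.exact_subtype_ker_map p)
    (Finsupp.linearCombination_id_surjective A X) (IsSMulRegular.finsupp h.regular) k

end IsRegularQuotient

/-- The ring `A` has finite global dimension on finitely generated modules: some `d` bounds the
degrees of all nonvanishing `Ext^i_A(X, Y)` with `X` finitely generated. -/
def HasFiniteExtDimension (A : Type u) [CommRing A] : Prop :=
  ∃ d : ℕ, ∀ (X Y : Type u) [AddCommGroup X] [Module A X] [Module.Finite A X] [AddCommGroup Y]
    [Module A Y] (i : ℕ), d < i → ExtVanish A X Y i

/-- The ring `A` has finite injective dimension over itself, as seen by finitely generated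
modules. -/
def HasFiniteSelfExtDimension (A : Type u) [CommRing A] : Prop :=
  ∃ d : ℕ, ∀ (X : Type u) [AddCommGroup X] [Module A X] [Module.Finite A X] (i : ℕ),
    d < i → ExtVanish A X A i

/-- A rigidity property of `Ext` along iterated cosyzygies `0 → X j → F j → X (j + 1) → 0`:
vanishing of `Ext^i(X j, D)` in the range `m < i ≤ j` implies vanishing for all `i > m`. -/
def IsCosyzygyRigid (A : Type u) [CommRing A] : Prop :=
  ∀ (m : ℕ) (D : Type u) [AddCommGroup D] [Module A D] (X F : ℕ → Type u)
    [∀ j, AddCommGroup (X j)] [∀ j, Module A (X j)] [∀ j, Module.Finite A (X j)]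
    [∀ j, AddCommGroup (F j)] [∀ j, Module A (F j)]
    (a : ∀ j, X j →ₗ[A] F j) (b : ∀ j, F j →ₗ[A] X (j + 1)),
    (∀ j, Function.Injective (a j)) → (∀ j, Function.Exact (a j) (b j)) →
    (∀ j, Function.Surjective (b j)) → (∀ i j, m < i → ExtVanish A (F j) D i) →
    (∀ i j, m < i → i ≤ j → ExtVanish A (X j) D i) → ∀ i j, m < i → ExtVanish A (X j) D i

lemma ExtVanish.of_shift {A : Type u} [CommRing A] {m : ℕ} {D : Type u} [AddCommGroup D]
    [Module A D] {X F : ℕ → Type u} [∀ j, AddCommGroup (X j)] [∀ j, Module A (X j)]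
    [∀ j, AddCommGroup (F j)] [∀ j, Module A (F j)]
    {a : ∀ j, X j →ₗ[A] F j} {b : ∀ j, F j →ₗ[A] X (j + 1)}
    (ha : ∀ j, Function.Injective (a j)) (hab : ∀ j, Function.Exact (a j) (b j))
    (hb : ∀ j, Function.Surjective (b j)) (hF : ∀ i j, m < i → ExtVanish A (F j) D i)
    {i j : ℕ} (hi : m < i) (l : ℕ) (h : ExtVanish A (X (j + l)) D (i + l)) :
    ExtVanish A (X j) D i := by
  induction l with
  | zero => exact h
  | succ l ih => exact ih (ExtVanish.left (ha _) (hab _) (hb _) (hF _ _ (by lia)) h)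

lemma HasFiniteExtDimension.isCosyzygyRigid {A : Type u} [CommRing A]
    (h : HasFiniteExtDimension A) : IsCosyzygyRigid A := by
  obtain ⟨d, hd⟩ := h
  intro m D _ _ X F _ _ _ _ _ a b ha hab hb hF _ i j hi
  exact ExtVanish.of_shift ha hab hb hF hi d (hd _ _ _ (by lia))

lemma HasFiniteExtDimension.hasFiniteSelfExtDimension {A : Type u} [CommRing A]
    (h : HasFiniteExtDimension A) : HasFiniteSelfExtDimension A :=
  h.imp fun _ hd X _ _ _ i hi => hd X A i hi

namespace IsRegularQuotient

variable {A B : Type u} [CommRing A] [CommRing B] [Algebra A B] {f : A}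
  (h : IsRegularQuotient A B f)

include h

lemma isCosyzygyRigid (hA : IsCosyzygyRigid A) : IsCosyzygyRigid B := by
  intro m D _ _ X F _ _ _ _ _ a b ha hab hb hF hX i j hi
  let : Module A D := Module.compHom D (algebraMap A B)
  let (j : ℕ) : Module A (X j) := Module.compHom (X j) (algebraMap A B)
  let (j : ℕ) : Module A (F j) := Module.compHom (F j) (algebraMap A B)
  have : IsScalarTower A B D := .of_compHom A B D
  have (j : ℕ) : IsScalarTower A B (X j) := .of_compHom A B (X j)
  have (j : ℕ) : IsScalarTower A B (F j) := .of_compHom A B (F j)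
  have : Module.Finite A B := .of_surjective (Algebra.linearMap A B) h.surjective
  have (j : ℕ) : Module.Finite A (X j) := .trans B (X j)
  have key : ∀ i j, m + 1 < i → ExtVanish A (X j) D i := by
    refine hA (m + 1) D X F (fun j => (a j).restrictScalars A) (fun j => (b j).restrictScalars A)
      ha hab hb (fun i j hi => ?_) (fun i j hi hij => ?_)
    · obtain ⟨k, rfl⟩ : ∃ k, i = k + 2 := ⟨i - 2, by lia⟩
      exact (h.extVanish_relations _ _ k).1 (hF _ _ (by lia)) (hF _ _ (by lia))
    · obtain ⟨k, rfl⟩ : ∃ k, i = k + 2 := ⟨i - 2, by lia⟩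
      exact (h.extVanish_relations _ _ k).1 (hX _ _ (by lia) (by lia)) (hX _ _ (by lia) hij)
  have periodic : ∀ t, ExtVanish B (X (j + 2 * i)) D (i + 2 * t) := by
    intro t
    induction t with
    | zero => exact hX _ _ hi (by lia)
    | succ t ih =>
      obtain ⟨k, hk⟩ : ∃ k, i + 2 * t = k + 1 := ⟨i + 2 * t - 1, by lia⟩
      rw [show i + 2 * (t + 1) = k + 3 by lia]
      rw [hk] at ih
      exact (h.extVanish_relations _ _ k).2 (key _ _ (by lia)) ih
  exact ExtVanish.of_shift ha hab hb hF hi (2 * i) (periodic i)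

end IsRegularQuotient

namespace IsRegularQuotient

variable {A B : Type u} [CommRing A] [CommRing B] [Algebra A B] {f : A}
  (h : IsRegularQuotient A B f)

include h

lemma extVanish_pi (n : ℕ) (D : Type u) [AddCommGroup D] [Module A D] (i : ℕ) :
    ExtVanish A (Fin n → B) D (i + 2) := by
  refine ExtVanish.right (f := (LinearMap.lsmul A (Fin n → A) f))
    (g := (Algebra.linearMap A B).compLeft (Fin n)) (IsSMulRegular.pi fun _ => h.regular) ?_ ?_
    (ExtVanish.of_projective _ _ i) (ExtVanish.of_projective _ _ _)
  · intro x
    constructor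
    · intro hx
      choose y hy using fun k => (h.exact_smul_algebraMap (x k)).1 (congrFun hx k)
      exact ⟨y, funext hy⟩
    · rintro ⟨y, rfl⟩
      funext k
      exact (h.exact_smul_algebraMap _).2 ⟨y k, rfl⟩
  · intro y
    choose x hx using fun k => h.surjective (y k)
    exact ⟨x, funext hx⟩

/-- The base case of Rees' change of rings: if `Ext^2_A(C, A) = 0` then maps to `B` extend along
monomorphisms of `B`-modules with cokernel `C`. -/
lemma exists_extension_of_extVanish_two {K G C : Type u} [AddCommGroup K] [Module A K] [Module B K]
    [IsScalarTower A B K] [AddCommGroup G] [Module A G] [Module B G] [IsScalarTower A B G]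
    [AddCommGroup C] [Module A C] {i : K →ₗ[A] G} {p : G →ₗ[A] C} (hi : Function.Injective i)
    (hip : Function.Exact i p) (hp : Function.Surjective p) (hC : ExtVanish A C A 2)
    (φ : K →ₗ[A] B) : ∃ ψ : G →ₗ[A] B, ψ ∘ₗ i = φ := by
  have hS := ExtVanish.shortExact (f := LinearMap.lsmul A A f) h.regular h.exact_smul_algebraMap
    h.surjective
  obtain ⟨e, he⟩ := Abelian.Ext.contravariant_sequence_exact₁ (ExtVanish.shortExact hi hip hp) _
    ((Abelian.Ext.mk₀ (ModuleCat.ofHom φ)).comp hS.extClass (zero_add 1))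
    (show 1 + 1 = 2 from rfl) (@Subsingleton.elim _ hC _ _)
  have hf : ModuleCat.ofHom (LinearMap.lsmul A A f) = f • 𝟙 (ModuleCat.of A A) := by
    ext; simp
  have hG : f • 𝟙 (ModuleCat.of A G) = 0 := by
    ext x
    exact h.smul_eq_zero x
  have hfe : f • e = 0 := by
    have : f • e = (Abelian.Ext.mk₀ (f • 𝟙 (ModuleCat.of A G))).comp e (zero_add 1) := by
      simp [Abelian.Ext.mk₀_smul]
    rw [this, hG, Abelian.Ext.mk₀_zero, Abelian.Ext.zero_comp]
  obtain ⟨x, rfl⟩ := Abelian.Ext.covariant_sequence_exact₁ _ hS e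
    (by
      change e.comp (Abelian.Ext.mk₀ (ModuleCat.ofHom (LinearMap.lsmul A A f))) (add_zero 1) = 0
      rw [hf, ← Abelian.Ext.smul_eq_comp_mk₀, hfe]) (zero_add 1)
  obtain ⟨ψ, rfl⟩ := (Abelian.Ext.mk₀_bijective _ _).2 x
  rw [← Abelian.Ext.comp_assoc_of_second_deg_zero, Abelian.Ext.mk₀_comp_mk₀] at he
  obtain ⟨y, hy⟩ := Abelian.Ext.covariant_sequence_exact₃ _ hS
    (Abelian.Ext.mk₀ (ModuleCat.ofHom i ≫ ψ) - Abelian.Ext.mk₀ (ModuleCat.ofHom φ)) (zero_add 1)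
    (by
      rw [sub_eq_add_neg, Abelian.Ext.add_comp, Abelian.Ext.neg_comp, ← sub_eq_add_neg, sub_eq_zero]
      exact he)
  obtain ⟨χ, rfl⟩ := (Abelian.Ext.mk₀_bijective _ _).2 y
  have hχ : χ = 0 := by
    ext x
    refine h.regular.right_eq_zero_of_smul (x := χ.hom x) ?_
    rw [← map_smul, h.smul_eq_zero x, map_zero]
  rw [hχ, Abelian.Ext.mk₀_zero, Abelian.Ext.zero_comp, eq_comm, sub_eq_zero] at hy
  exact ⟨ψ.hom, by
    simpa using congrArg ModuleCat.Hom.hom ((Abelian.Ext.mk₀_bijective _ _).1 hy)⟩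

/-- Rees' change of rings, at the level of vanishing: `Ext^{i+2}_A(X, A) = 0` implies
`Ext^{i+1}_B(X, B) = 0`. -/
lemma extVanish_self [IsNoetherianRing B] (i : ℕ) (X : Type u) [AddCommGroup X] [Module A X]
    [Module B X] [IsScalarTower A B X] [Module.Finite B X] (hX : ExtVanish A X A (i + 2)) :
    ExtVanish B X B (i + 1) := by
  induction i generalizing X with
  | zero =>
    obtain ⟨n, p, hp⟩ := Module.Finite.exists_fin' B X
    have hex := LinearMap.exact_subtype_ker_map p
    refine ExtVanish.one_of_exists_extension (Submodule.injective_subtype _) hex hp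
      (ExtVanish.of_projective _ _ _) fun φ => ?_
    obtain ⟨ψ, hψ⟩ := h.exists_extension_of_extVanish_two
      (i := (LinearMap.ker p).subtype.restrictScalars A) (p := p.restrictScalars A)
      (Submodule.injective_subtype _) hex hp hX (φ.restrictScalars A)
    refine ⟨LinearMap.extendScalarsOfSurjective h.surjective ψ, ?_⟩
    ext x
    exact LinearMap.congr_fun hψ x
  | succ i ih =>
    obtain ⟨n, p, hp⟩ := Module.Finite.exists_fin' B X
    have hex := LinearMap.exact_subtype_ker_map p
    refine ExtVanish.right (Submodule.injective_subtype _) hex hp (ih (LinearMap.ker p) ?_)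
      (ExtVanish.of_projective _ _ _)
    exact ExtVanish.left (f := (LinearMap.ker p).subtype.restrictScalars A)
      (g := p.restrictScalars A) (Submodule.injective_subtype _) hex hp (h.extVanish_pi n A i) hX

lemma hasFiniteSelfExtDimension [IsNoetherianRing B] (hA : HasFiniteSelfExtDimension A) :
    HasFiniteSelfExtDimension B := by
  obtain ⟨d, hd⟩ := hA
  refine ⟨d, fun X _ _ _ i hi => ?_⟩
  let : Module A X := Module.compHom X (algebraMap A B)
  have : IsScalarTower A B X := .of_compHom A B X
  have : Module.Finite A B := .of_surjective (Algebra.linearMap A B) h.surjective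
  have : Module.Finite A X := .trans B X
  obtain ⟨k, rfl⟩ : ∃ k, i = k + 1 := ⟨i - 1, by lia⟩
  exact h.extVanish_self k X (hd X _ (by lia))

end IsRegularQuotient

/-- The projective dimension of a finitely generated module over a Noetherian local ring does not
exceed that of its reduction modulo an element of the maximal ideal regular on ring and module. -/
lemma hasProjectiveDimensionLT_of_baseChange {A : Type u} [CommRing A] [IsLocalRing A]
    [IsNoetherianRing A] {x : A} (hx : x ∈ IsLocalRing.maximalIdeal A) (hreg : IsSMulRegular A x)
    (n : ℕ) (S : Type u) [AddCommGroup S] [Module A S] [Module.Finite A S]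
    (hS : IsSMulRegular S x)
    (hpd : HasProjectiveDimensionLT
      (ModuleCat.of (A ⧸ Ideal.span {x}) ((A ⧸ Ideal.span {x}) ⊗[A] S)) (n + 1)) :
    HasProjectiveDimensionLT (ModuleCat.of A S) (n + 1) := by
  have h : IsRegularQuotient A (A ⧸ Ideal.span {x}) x :=
    ⟨hreg, Ideal.Quotient.mk_surjective, Ideal.mk_ker⟩
  induction n generalizing S with
  | zero =>
    have : Nontrivial (A ⧸ Ideal.span {x}) := Ideal.Quotient.nontrivial_iff.2 fun htop =>
      (IsLocalRing.maximalIdeal.isMaximal A).ne_top (top_le_iff.1 (htop ▸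
        (Ideal.span_singleton_le_iff_mem _).2 hx))
    have : IsLocalRing (A ⧸ Ideal.span {x}) :=
      .of_surjective' (Ideal.Quotient.mk _) Ideal.Quotient.mk_surjective
    have : Module.Projective (A ⧸ Ideal.span {x}) ((A ⧸ Ideal.span {x}) ⊗[A] S) :=
      (IsProjective.iff_projective _).2 (projective_iff_hasProjectiveDimensionLT_one.2 hpd)
    have : Module.Free (A ⧸ Ideal.span {x}) ((A ⧸ Ideal.span {x}) ⊗[A] S) :=
      Module.free_of_flat_of_isLocalRing
    have : Module.Free (A ⧸ Ideal.span {x}) (QuotSMulTop x S) :=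
      Module.Free.of_equiv ((QuotSMulTop.equivQuotTensor x S).extendScalarsOfSurjective
        Ideal.Quotient.mk_surjective).symm
    have : Module.FinitePresentation A S := Module.finitePresentation_of_finite A S
    have : Module.Free A S := (Module.free_quotSMulTop_iff_free A S
      (by rwa [IsLocalRing.jacobson_eq_maximalIdeal ⊥ bot_ne_top]) hS).1 inferInstance
    exact projective_iff_hasProjectiveDimensionLT_one.1 inferInstance
  | succ n ih =>
    obtain ⟨k, p, hp⟩ := Module.Finite.exists_fin' A S
    have hex := LinearMap.exact_subtype_ker_map p
    have hinj := h.baseChange_injective (Submodule.injective_subtype _) hex hS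
    have hexB : Function.Exact ((LinearMap.ker p).subtype.baseChange (A ⧸ Ideal.span {x}))
        (p.baseChange (A ⧸ Ideal.span {x})) := IsRegularQuotient.baseChange_exact hex hp
    have hpB : Function.Surjective (p.baseChange (A ⧸ Ideal.span {x})) :=
      LinearMap.lTensor_surjective _ hp
    refine ((ExtVanish.shortExact (Submodule.injective_subtype _) hex
      hp).hasProjectiveDimensionLT_X₃_iff n
        (inferInstanceAs (Projective (ModuleCat.of A (Fin k → A))))).2 ?_
    refine ih (LinearMap.ker p) ((IsSMulRegular.pi fun _ => hreg).submodule _ _) ?_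
    exact ((ExtVanish.shortExact hinj hexB hpB).hasProjectiveDimensionLT_X₃_iff n
        (inferInstanceAs (Projective (ModuleCat.of (A ⧸ Ideal.span {x})
          ((A ⧸ Ideal.span {x}) ⊗[A] (Fin k → A)))))).1 hpd

/-- If every finitely generated module over `A ⧸ (x)` has projective dimension `≤ d`, then every
finitely generated module over `A` has projective dimension `≤ d + 1`. -/
lemma hasProjectiveDimensionLT_of_quotient {A : Type u} [CommRing A] [IsLocalRing A]
    [IsNoetherianRing A] {x : A} (hx : x ∈ IsLocalRing.maximalIdeal A) (hreg : IsSMulRegular A x)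
    {d : ℕ} (hd : ∀ (Y : Type u) [AddCommGroup Y] [Module (A ⧸ Ideal.span {x}) Y]
      [Module.Finite (A ⧸ Ideal.span {x}) Y],
      HasProjectiveDimensionLT (ModuleCat.of (A ⧸ Ideal.span {x}) Y) (d + 1))
    (X : Type u) [AddCommGroup X] [Module A X] [Module.Finite A X] :
    HasProjectiveDimensionLT (ModuleCat.of A X) (d + 2) := by
  obtain ⟨k, p, hp⟩ := Module.Finite.exists_fin' A X
  refine ((ExtVanish.shortExact (Submodule.injective_subtype _)
    (LinearMap.exact_subtype_ker_map p) hp).hasProjectiveDimensionLT_X₃_iff d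
        (inferInstanceAs (Projective (ModuleCat.of A (Fin k → A))))).2 ?_
  exact hasProjectiveDimensionLT_of_baseChange hx hreg d (LinearMap.ker p)
    ((IsSMulRegular.pi fun _ => hreg).submodule _ _) (hd _)

end RegularQuotient

section RegularLocal

open IsLocalRing

/-- A local ring is a domain as soon as some `x` in the maximal ideal lying in no minimal prime
generates a prime ideal. -/
lemma isDomain_of_span_singleton_isPrime {A : Type u} [CommRing A] [IsLocalRing A]
    [IsNoetherianRing A] {x : A} (hx : x ∈ maximalIdeal A)
    (hmin : ∀ p ∈ minimalPrimes A, x ∉ p) (hp : (Ideal.span {x}).IsPrime) : IsDomain A := by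
  obtain ⟨p, hpmin, hple⟩ := Ideal.exists_minimalPrimes_le (bot_le : (⊥ : Ideal A) ≤ Ideal.span {x})
  have hpp : p.IsPrime := hpmin.1.1
  have hbot : p = ⊥ := by
    refine Submodule.eq_bot_of_le_smul_of_le_jacobson_bot (maximalIdeal A) p
      (IsNoetherian.noetherian p) (fun y hy => ?_)
      (IsLocalRing.jacobson_eq_maximalIdeal ⊥ bot_ne_top).ge
    obtain ⟨z, rfl⟩ := Ideal.mem_span_singleton'.1 (hple hy)
    rw [mul_comm]
    exact Submodule.smul_mem_smul hx ((hpp.mem_or_mem hy).resolve_right (hmin p hpmin))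
  rw [hbot] at hpp
  exact IsDomain.of_bot_isPrime A

/-- Some member of a finite system of generators of the maximal ideal can be exchanged for a given
element outside the square of the maximal ideal. -/
lemma exists_span_quotient_eq_maximalIdeal {A : Type u} [CommRing A] [IsLocalRing A]
    [DecidableEq A] {s : Finset A} (hs : Ideal.span (s : Set A) = maximalIdeal A) {x : A}
    (hx : x ∈ maximalIdeal A) (hx2 : x ∉ maximalIdeal A ^ 2) :
    ∃ y ∈ s, maximalIdeal A = Ideal.span (s.erase y : Set A) ⊔ Ideal.span {x} := by
  have hx' := hx
  rw [← hs] at hx'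
  obtain ⟨a, ha⟩ := Submodule.mem_span_finset'.1 hx'
  obtain ⟨y, hy⟩ : ∃ y : s, a y ∉ maximalIdeal A := by
    by_contra! hcon
    refine hx2 ?_
    rw [← ha, pow_two]
    exact Ideal.sum_mem _ fun y _ => Ideal.mul_mem_mul (hcon y) (hs ▸ Ideal.subset_span y.2)
  refine ⟨y, y.2, le_antisymm ?_ (sup_le ?_ ((Ideal.span_singleton_le_iff_mem _).2 hx))⟩
  · rw [← hs, Ideal.span_le]
    intro z hz
    by_cases hzy : z = y
    · subst hzy
      have hunit : IsUnit (a y) := by simpa using hy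
      have key : a y * (y : A) ∈ Ideal.span (s.erase y : Set A) ⊔ Ideal.span {x} := by
        have : a y * (y : A) = x - ∑ z ∈ Finset.univ.erase y, a z * (z : A) := by
          rw [← ha, ← Finset.add_sum_erase _ _ (Finset.mem_univ y)]
          simp
        rw [this]
        refine Ideal.sub_mem _ (Ideal.mem_sup_right (Ideal.mem_span_singleton_self x))
          (Ideal.mem_sup_left (Ideal.sum_mem _ fun z hz => Ideal.mul_mem_left _ _
            (Ideal.subset_span ?_)))
        simpa [Subtype.coe_inj] using hz
      exact (Ideal.unit_mul_mem_iff_mem _ hunit).1 key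
    · exact Ideal.mem_sup_left (Ideal.subset_span (by simp [hzy]; exact hz))
  · rw [← hs]
    exact Ideal.span_mono (by simp)

lemma exists_notMem_minimalPrimes {A : Type u} [CommRing A] [IsLocalRing A] [IsNoetherianRing A]
    (hdim : 0 < ringKrullDim A) :
    ∃ x ∈ maximalIdeal A, x ∉ maximalIdeal A ^ 2 ∧ ∀ p ∈ minimalPrimes A, x ∉ p := by
  classical
  by_contra! hcon
  have hheight : (maximalIdeal A).height ≠ 0 := by
    rw [← IsLocalRing.maximalIdeal_height_eq_ringKrullDim] at hdim
    exact_mod_cast hdim.ne'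
  have hfin : (minimalPrimes A).Finite := minimalPrimes.finite_of_isNoetherianRing A
  obtain ⟨I, hI, hle⟩ := (Ideal.subset_union_prime (s := insert (maximalIdeal A ^ 2) hfin.toFinset)
    (f := id) (I := maximalIdeal A) (maximalIdeal A ^ 2) (maximalIdeal A ^ 2)
    (fun I hI h1 _ => by
      have : I ∈ minimalPrimes A := by simpa [h1] using hI
      exact this.1.1)).1 (fun x hx => by
        by_cases h2 : x ∈ maximalIdeal A ^ 2
        · exact Set.mem_biUnion (x := maximalIdeal A ^ 2) (by simp) h2
        · obtain ⟨p, hp, hxp⟩ := hcon x hx h2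
          exact Set.mem_biUnion (x := p) (by simp [hp]) hxp)
  rw [Finset.mem_insert, Set.Finite.mem_toFinset] at hI
  apply hheight
  rcases hI with rfl | hI
  · have : maximalIdeal A = ⊥ := by
      refine Submodule.eq_bot_of_le_smul_of_le_jacobson_bot (maximalIdeal A) (maximalIdeal A)
        (IsNoetherian.noetherian _) ?_ (IsLocalRing.jacobson_eq_maximalIdeal ⊥ bot_ne_top).ge
      simpa [pow_two] using hle
    rw [this]
    simp
  · have hIm : I = maximalIdeal A :=
      le_antisymm (IsLocalRing.le_maximalIdeal hI.1.1.ne_top) hle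
    rw [← hIm]
    have := hI.1.1
    exact Ideal.height_eq_zero_iff.2 hI

/-- Regular local rings are domains of finite global dimension. -/
theorem isDomain_and_hasProjectiveDimensionLT (d : ℕ) (A : Type u) [CommRing A] [IsLocalRing A]
    [IsNoetherianRing A] (s : Finset A) (hs : Ideal.span (s : Set A) = maximalIdeal A)
    (hcard : s.card ≤ d) (hdim : (d : WithBot ℕ∞) ≤ ringKrullDim A) :
    IsDomain A ∧ ∀ (X : Type u) [AddCommGroup X] [Module A X] [Module.Finite A X],
      HasProjectiveDimensionLT (ModuleCat.of A X) (d + 1) := by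
  classical
  induction d generalizing A with
  | zero =>
    obtain rfl : s = ∅ := by simpa using hcard
    have hA : IsField A := isField_iff_maximalIdeal_eq.2 (by simpa using hs.symm)
    refine ⟨hA.isDomain, fun X _ _ _ => ?_⟩
    let := hA.toField
    have : Module.Projective A X := inferInstance
    exact projective_iff_hasProjectiveDimensionLT_one.1 inferInstance
  | succ d ih =>
    obtain ⟨x, hx, hx2, hmin⟩ := exists_notMem_minimalPrimes (A := A)
      (lt_of_lt_of_le (by exact_mod_cast d.succ_pos) hdim)
    obtain ⟨y, hy, hsy⟩ := exists_span_quotient_eq_maximalIdeal hs hx hx2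
    have : Nontrivial (A ⧸ Ideal.span {x}) := Ideal.Quotient.nontrivial_iff.2 fun htop =>
      (IsLocalRing.maximalIdeal.isMaximal A).ne_top (top_le_iff.1 (htop ▸
        (Ideal.span_singleton_le_iff_mem _).2 hx))
    have : IsLocalRing (A ⧸ Ideal.span {x}) :=
      .of_surjective' (Ideal.Quotient.mk _) Ideal.Quotient.mk_surjective
    obtain ⟨hdom, hpd⟩ := ih (A ⧸ Ideal.span {x})
      ((s.erase y).image (Ideal.Quotient.mk (Ideal.span {x}))) (by
        rw [← map_maximalIdeal_of_surjective (Ideal.Quotient.mk (Ideal.span {x}))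
          Ideal.Quotient.mk_surjective, hsy, Ideal.map_sup, Ideal.map_span, Ideal.map_quotient_self,
          sup_bot_eq, Finset.coe_image])
      (Finset.card_image_le.trans (by rw [Finset.card_erase_of_mem hy]; lia)) (by
        have := ringKrullDim_le_ringKrullDim_quotient_add_card {x}
          (by simpa [IsLocalRing.ringJacobson_eq_maximalIdeal] using hx)
        rw [Finset.coe_singleton, Finset.card_singleton] at this
        have := hdim.trans this
        push_cast at this
        exact ENat.WithBot.add_le_add_one_right_iff.1 this)
    have hA : IsDomain A := isDomain_of_span_singleton_isPrime hx hmin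
      ((Ideal.Quotient.isDomain_iff_prime _).1 hdom)
    have hx0 : x ≠ 0 := fun h0 => hx2 (h0 ▸ zero_mem _)
    exact ⟨hA, fun X _ _ _ => hasProjectiveDimensionLT_of_quotient hx
      (IsSMulRegular.of_ne_zero hx0) hpd X⟩

lemma hasFiniteExtDimension_of_span_card {A : Type u} [CommRing A] [IsLocalRing A]
    [IsNoetherianRing A] (s : Finset A) (hs : Ideal.span (s : Set A) = maximalIdeal A)
    (hdim : (s.card : WithBot ℕ∞) ≤ ringKrullDim A) : HasFiniteExtDimension A := by
  refine ⟨s.card, fun X Y _ _ _ _ _ i hi => ?_⟩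
  have := (isDomain_and_hasProjectiveDimensionLT s.card A s hs le_rfl hdim).2 X
  exact HasProjectiveDimensionLT.subsingleton _ (s.card + 1) i hi _

end RegularLocal

lemma isRegularQuotient_ofList_append {Q : Type u} [CommRing Q] {l : List Q} {g : Q}
    (hreg : RingTheory.Sequence.IsWeaklyRegular Q (l ++ [g])) :
    letI : Algebra (Q ⧸ Ideal.ofList l) (Q ⧸ Ideal.ofList (l ++ [g])) :=
      (Ideal.Quotient.factor (Ideal.ofList_append l [g] ▸ le_sup_left)).toAlgebra
    IsRegularQuotient (Q ⧸ Ideal.ofList l) (Q ⧸ Ideal.ofList (l ++ [g]))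
      (Ideal.Quotient.mk _ g) := by
  have hle : Ideal.ofList l ≤ Ideal.ofList (l ++ [g]) :=
    Ideal.ofList_append l [g] ▸ le_sup_left
  let : Algebra (Q ⧸ Ideal.ofList l) (Q ⧸ Ideal.ofList (l ++ [g])) :=
    (Ideal.Quotient.factor hle).toAlgebra
  refine ⟨?_, Ideal.Quotient.factor_surjective hle, ?_⟩
  · have h := ((RingTheory.Sequence.isWeaklyRegular_append_iff Q l [g]).1 hreg).2
    rw [RingTheory.Sequence.isWeaklyRegular_singleton_iff,
      isSMulRegular_quotient_iff_mem_of_smul_mem] at h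
    rw [isSMulRegular_iff_right_eq_zero_of_smul]
    intro y hy
    obtain ⟨y, rfl⟩ := Ideal.Quotient.mk_surjective y
    rw [smul_eq_mul, ← map_mul, Ideal.Quotient.eq_zero_iff_mem] at hy
    rw [Ideal.Quotient.eq_zero_iff_mem]
    simpa using h y (by simpa using hy)
  · change RingHom.ker (Ideal.Quotient.factor hle) = _
    rw [Ideal.Quotient.factor_ker, Ideal.ofList_append, Ideal.map_sup, Ideal.map_quotient_self,
      bot_sup_eq, Ideal.ofList_singleton, Ideal.map_span, Set.image_singleton]

lemma isCosyzygyRigid_and_hasFiniteSelfExtDimension_of_isWeaklyRegular {Q : Type u} [CommRing Q]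
    [IsNoetherianRing Q] (hQ : HasFiniteExtDimension (Q ⧸ Ideal.ofList ([] : List Q)))
    (l : List Q) (hl : RingTheory.Sequence.IsWeaklyRegular Q l) :
    IsCosyzygyRigid (Q ⧸ Ideal.ofList l) ∧ HasFiniteSelfExtDimension (Q ⧸ Ideal.ofList l) := by
  induction l using List.reverseRecOn with
  | nil => exact ⟨hQ.isCosyzygyRigid, hQ.hasFiniteSelfExtDimension⟩
  | append_singleton l g ih =>
    let : Algebra (Q ⧸ Ideal.ofList l) (Q ⧸ Ideal.ofList (l ++ [g])) :=
      (Ideal.Quotient.factor (Ideal.ofList_append l [g] ▸ le_sup_left)).toAlgebra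
    have h := isRegularQuotient_ofList_append hl
    obtain ⟨h1, h2⟩ := ih ((RingTheory.Sequence.isWeaklyRegular_append_iff Q l [g]).1 hl).1
    exact ⟨h.isCosyzygyRigid h1, h.hasFiniteSelfExtDimension h2⟩

/-- Complete intersections are Gorenstein and satisfy rigidity of cosyzygies. -/
theorem isCosyzygyRigid_and_hasFiniteSelfExtDimension_of_isRegular {Q : Type u} [CommRing Q]
    [IsLocalRing Q] [IsNoetherianRing Q] (s : Finset Q)
    (hs : Ideal.span (s : Set Q) = IsLocalRing.maximalIdeal Q)
    (hdim : (s.card : WithBot ℕ∞) = ringKrullDim Q)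
    (l : List Q) (hl : RingTheory.Sequence.IsWeaklyRegular Q l) :
    IsCosyzygyRigid (Q ⧸ Ideal.ofList l) ∧ HasFiniteSelfExtDimension (Q ⧸ Ideal.ofList l) := by
  classical
  refine isCosyzygyRigid_and_hasFiniteSelfExtDimension_of_isWeaklyRegular ?_ l hl
  rw [Ideal.ofList_nil]
  let e : Q ≃+* Q ⧸ (⊥ : Ideal Q) := (RingEquiv.quotientBot Q).symm
  have : IsLocalRing (Q ⧸ (⊥ : Ideal Q)) := e.isLocalRing
  refine hasFiniteExtDimension_of_span_card (s.image (Ideal.Quotient.mk ⊥)) ?_ ?_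
  · rw [← IsLocalRing.map_maximalIdeal_of_surjective (Ideal.Quotient.mk (⊥ : Ideal Q))
      Ideal.Quotient.mk_surjective, ← hs, Ideal.map_span, Finset.coe_image]
  · rw [← ringKrullDim_eq_of_ringEquiv e, ← hdim]
    exact_mod_cast Finset.card_image_le

/-- Vanishing of the derived functor `Ext` implies vanishing of `Ext` computed in the derived
category. -/
lemma extVanish_of_isZero_ext {R : Type u} [CommRing R] {X Y : Type u} [AddCommGroup X] [Module R X]
    [AddCommGroup Y] [Module R Y] (i : ℕ)
    (h : IsZero (((Ext R (ModuleCat.{u} R) (i + 1)).obj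
      (Opposite.op (ModuleCat.of R X))).obj (ModuleCat.of R Y))) : ExtVanish R X Y (i + 1) := by
  let P := projectiveResolution (ModuleCat.of R X)
  have h1 := h.of_iso (P.isoExt (i + 1) (ModuleCat.of R Y)).symm
  rw [← HomologicalComplex.exactAt_iff_isZero_homology,
    HomologicalComplex.exactAt_iff' _ i (i + 1) (i + 2) (by simp) (by simp),
    ShortComplex.moduleCat_exact_iff] at h1
  refine subsingleton_of_forall_eq 0 fun x => ?_
  obtain ⟨f, hf, rfl⟩ := P.extMk_surjective x (i + 2) rfl
  rw [P.extMk_eq_zero_iff f _ rfl hf i rfl]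
  exact h1 f hf

section Cokernel

variable {R : Type u} [CommRing R] {A B C : Type u} [AddCommGroup A] [Module R A] [AddCommGroup B]
  [Module R B] [AddCommGroup C] [Module R C] {f : A →ₗ[R] B} {g : B →ₗ[R] C}

/-- The map `B ⧸ range f → C` induced by `g : B → C` with `g ∘ f = 0`. -/
def cokernelLift (h : g ∘ₗ f = 0) : (B ⧸ LinearMap.range f) →ₗ[R] C :=
  (LinearMap.range f).liftQ g (LinearMap.range_le_ker_iff.2 h)

@[simp]
lemma cokernelLift_comp_mkQ (h : g ∘ₗ f = 0) :
    cokernelLift h ∘ₗ (LinearMap.range f).mkQ = g := rfl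

lemma cokernelLift_injective_iff (h : g ∘ₗ f = 0) :
    Function.Injective (cokernelLift h) ↔ Function.Exact f g := by
  rw [← LinearMap.ker_eq_bot, cokernelLift, LinearMap.exact_iff, Submodule.ker_liftQ,
    ← le_bot_iff, Submodule.map_le_iff_le_comap, Submodule.comap_bot, Submodule.ker_mkQ]
  exact ⟨fun h' => le_antisymm h' (LinearMap.range_le_ker_iff.2 h), fun h' => h'.le⟩

lemma range_cokernelLift (h : g ∘ₗ f = 0) :
    LinearMap.range (cokernelLift h) = LinearMap.range g :=
  Submodule.range_liftQ _ _ _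

lemma exact_cokernelLift_mkQ (h : g ∘ₗ f = 0) :
    Function.Exact (cokernelLift h) (LinearMap.range g).mkQ := by
  rw [LinearMap.exact_iff, Submodule.ker_mkQ, range_cokernelLift]

end Cokernel

section CochainComplex

variable {R : Type u} [CommRing R] {D : Type u} [AddCommGroup D] [Module R D] {C : ℕ → Type u}
  [∀ j, AddCommGroup (C j)] [∀ j, Module R (C j)] {δ : ∀ j, C j →ₗ[R] C (j + 1)}

/-- If `Hom(C, D)` is exact then maps into `D` extend along the maps from the cokernels of `C`. -/
lemma exists_comp_cokernelLift (hδ : ∀ j, δ (j + 1) ∘ₗ δ j = 0)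
    (hD : ∀ j (φ : C (j + 1) →ₗ[R] D), φ ∘ₗ δ j = 0 → ∃ ψ, ψ ∘ₗ δ (j + 1) = φ) (j : ℕ)
    (φ : (C (j + 1) ⧸ LinearMap.range (δ j)) →ₗ[R] D) :
    ∃ ψ, ψ ∘ₗ cokernelLift (hδ j) = φ := by
  obtain ⟨ψ, hψ⟩ := hD j (φ ∘ₗ (LinearMap.range (δ j)).mkQ) (by
    rw [LinearMap.comp_assoc, LinearMap.range_mkQ_comp, LinearMap.comp_zero])
  refine ⟨ψ, Submodule.linearMap_qext _ ?_⟩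
  rw [LinearMap.comp_assoc, cokernelLift_comp_mkQ, hψ]

/-- The image of a differential inherits `Ext`-vanishing from the cokernel. -/
lemma extVanish_range {j : ℕ} [Module.Projective R (C (j + 1))]
    (h : ExtVanish R (C (j + 1) ⧸ LinearMap.range (δ j)) D 2) :
    ExtVanish R (LinearMap.range (δ j)) D 1 :=
  ExtVanish.left (Submodule.injective_subtype _) (LinearMap.exact_subtype_mkQ _)
    (Submodule.mkQ_surjective _) (ExtVanish.of_projective _ _ _) h

variable [∀ j, Module.Projective R (C j)]

lemma extVanish_cokernel_of_exact [∀ j, Module.Finite R (C j)] (hR : IsCosyzygyRigid R)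
    (hδ : ∀ j, δ (j + 1) ∘ₗ δ j = 0)
    (hD : ∀ j (φ : C (j + 1) →ₗ[R] D), φ ∘ₗ δ j = 0 → ∃ ψ, ψ ∘ₗ δ (j + 1) = φ) {s : ℕ}
    (hs : ∀ j, s ≤ j → Function.Exact (δ j) (δ (j + 1))) (i : ℕ) :
    ExtVanish R (C (s + 1) ⧸ LinearMap.range (δ s)) D (i + 1) := by
  have hinj (j : ℕ) : Function.Injective (cokernelLift (hδ (s + j))) :=
    (cokernelLift_injective_iff _).2 (hs _ (by lia))
  have hF (i j : ℕ) (hi : 0 < i) : ExtVanish R (C (s + j + 2)) D i := by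
    obtain ⟨i, rfl⟩ : ∃ k, i = k + 1 := ⟨i - 1, by lia⟩
    exact ExtVanish.of_projective _ _ _
  have range (i : ℕ) : ∀ j, i + 1 ≤ j →
      ExtVanish R (C (s + j + 1) ⧸ LinearMap.range (δ (s + j))) D (i + 1) := by
    induction i with
    | zero =>
      intro j hj
      obtain ⟨j, rfl⟩ : ∃ k, j = k + 1 := ⟨j - 1, by lia⟩
      exact ExtVanish.one_of_exists_extension (hinj j) (exact_cokernelLift_mkQ _)
        (Submodule.mkQ_surjective _) (hF 1 j one_pos) (exists_comp_cokernelLift hδ hD _)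
    | succ i ih =>
      intro j hj
      obtain ⟨j, rfl⟩ : ∃ k, j = k + 1 := ⟨j - 1, by lia⟩
      exact ExtVanish.right (hinj j) (exact_cokernelLift_mkQ _) (Submodule.mkQ_surjective _)
        (ih j (by lia)) (hF _ j (by lia))
  exact hR 0 D (fun j => C (s + j + 1) ⧸ LinearMap.range (δ (s + j))) (fun j => C (s + j + 2))
    (fun j => cokernelLift (hδ (s + j))) (fun j => (LinearMap.range (δ (s + j + 1))).mkQ)
    hinj (fun j => exact_cokernelLift_mkQ _) (fun j => Submodule.mkQ_surjective _) hF
    (fun i j hi hij => by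
      obtain ⟨i, rfl⟩ : ∃ k, i = k + 1 := ⟨i - 1, by lia⟩
      exact range i j hij) (i + 1) 0 i.succ_pos

/-- A complex `C` of finitely generated projectives, exact in large degrees and with `Hom(C, D)`
exact, is itself exact. -/
lemma exact_of_hom_exact [∀ j, Module.Finite R (C j)] [IsNoetherianRing R]
    (hR : IsCosyzygyRigid R)
    (hH : ∀ (H : Type u) [AddCommGroup H] [Module R H] [Module.Finite R H],
      (∀ φ : H →ₗ[R] D, φ = 0) → Subsingleton H)
    (hδ : ∀ j, δ (j + 1) ∘ₗ δ j = 0)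
    (hD : ∀ j (φ : C (j + 1) →ₗ[R] D), φ ∘ₗ δ j = 0 → ∃ ψ, ψ ∘ₗ δ (j + 1) = φ) {s : ℕ}
    (hs : ∀ j, s ≤ j → Function.Exact (δ j) (δ (j + 1))) (j : ℕ) :
    Function.Exact (δ j) (δ (j + 1)) := by
  induction s with
  | zero => exact hs j j.zero_le
  | succ s ih =>
    refine ih fun j hj => ?_
    obtain rfl | hj := hj.eq_or_lt
    swap
    · exact hs j hj
    rw [← cokernelLift_injective_iff (hδ s), ← LinearMap.ker_eq_bot,
      ← Submodule.subsingleton_iff_eq_bot]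
    refine hH _ fun φ => ?_
    have hI : ExtVanish R (LinearMap.range (cokernelLift (hδ s))) D 1 := by
      rw [range_cokernelLift]
      exact extVanish_range (extVanish_cokernel_of_exact hR hδ hD hs 1)
    obtain ⟨χ, hχ⟩ := ExtVanish.exists_extension (Submodule.injective_subtype _)
      (g := (cokernelLift (hδ s)).rangeRestrict)
      (by rw [LinearMap.exact_iff, LinearMap.ker_rangeRestrict, Submodule.range_subtype])
      (LinearMap.surjective_rangeRestrict _) hI φ
    obtain ⟨ψ, rfl⟩ := exists_comp_cokernelLift hδ hD s χ
    rw [← hχ, LinearMap.comp_assoc, LinearMap.comp_ker_subtype, LinearMap.comp_zero]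

/-- For such a complex, `Hom(C 1, D) → Hom(C 0, D) → Hom(L, D) → 0` is exact, where
`0 → L → C 0 → C 1` is exact. -/
lemma exists_extension_and_exists_factorization [∀ j, Module.Finite R (C j)]
    (hR : IsCosyzygyRigid R) (hδ : ∀ j, δ (j + 1) ∘ₗ δ j = 0)
    (hD : ∀ j (φ : C (j + 1) →ₗ[R] D), φ ∘ₗ δ j = 0 → ∃ ψ, ψ ∘ₗ δ (j + 1) = φ)
    (hs : ∀ j, Function.Exact (δ j) (δ (j + 1))) {L : Type u} [AddCommGroup L] [Module R L]
    {f : L →ₗ[R] C 0} (hf : Function.Injective f) (hfδ : Function.Exact f (δ 0)) :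
    (∀ φ : L →ₗ[R] D, ∃ ψ, ψ ∘ₗ f = φ) ∧
      ∀ φ : C 0 →ₗ[R] D, φ ∘ₗ f = 0 → ∃ ψ, ψ ∘ₗ δ 0 = φ := by
  have hE := extVanish_cokernel_of_exact hR hδ hD (s := 0) fun j _ => hs j
  constructor
  · intro φ
    exact ExtVanish.exists_extension hf (g := (δ 0).rangeRestrict)
      (by rw [LinearMap.exact_iff, LinearMap.ker_rangeRestrict, ← LinearMap.exact_iff]; exact hfδ)
      (LinearMap.surjective_rangeRestrict _) (extVanish_range (hE 1)) φ
  · intro φ hφ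
    have h0 : δ 0 ∘ₗ f = 0 := hfδ.linearMap_comp_eq_zero
    obtain ⟨ψ, hψ⟩ := ExtVanish.exists_extension ((cokernelLift_injective_iff h0).2 hfδ)
      (exact_cokernelLift_mkQ h0) (Submodule.mkQ_surjective _) (hE 0) (cokernelLift hφ)
    refine ⟨ψ, ?_⟩
    rw [← cokernelLift_comp_mkQ h0, ← LinearMap.comp_assoc, hψ, cokernelLift_comp_mkQ]

end CochainComplex

section Character

open TensorProduct

variable {R : Type u} [CommRing R] {A B C N : Type u} [AddCommGroup A] [Module R A]
  [AddCommGroup B] [Module R B] [AddCommGroup C] [Module R C] [AddCommGroup N] [Module R N]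
  {f : A →ₗ[R] B} {g : B →ₗ[R] C}

lemma exact_iff_dual_character (h : g ∘ₗ f = 0) :
    Function.Exact f g ↔ ∀ χ : CharacterModule B, CharacterModule.dual f χ = 0 →
      ∃ ψ, CharacterModule.dual g ψ = χ := by
  constructor
  · intro hfg χ hχ
    obtain ⟨ψ, hψ⟩ := CharacterModule.dual_surjective_of_injective _
      ((cokernelLift_injective_iff h).2 hfg) (QuotientAddGroup.lift
        (LinearMap.range f).toAddSubgroup χ (by
          rintro _ ⟨a, rfl⟩
          exact DFunLike.congr_fun hχ a))
    refine ⟨ψ, ?_⟩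
    ext b
    exact DFunLike.congr_fun hψ (Submodule.Quotient.mk b)
  · intro H b
    refine ⟨fun hb => ?_, fun ⟨a, ha⟩ => ha ▸ LinearMap.congr_fun h a⟩
    rw [← LinearMap.coe_range, SetLike.mem_coe, ← Submodule.Quotient.mk_eq_zero]
    refine CharacterModule.eq_zero_of_character_apply fun χ => ?_
    obtain ⟨ψ, hψ⟩ := H (CharacterModule.dual (LinearMap.range f).mkQ χ) (by
      rw [← LinearMap.comp_apply, ← CharacterModule.dual_comp, LinearMap.range_mkQ_comp,
        CharacterModule.dual_zero, LinearMap.zero_apply])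
    have := DFunLike.congr_fun hψ b
    refine this.symm.trans ?_
    change ψ (g b) = 0
    rw [hb, map_zero]

lemma exact_rTensor_iff_hom_character (h : g ∘ₗ f = 0) :
    Function.Exact (f.rTensor N) (g.rTensor N) ↔
      ∀ φ : B →ₗ[R] CharacterModule N, φ ∘ₗ f = 0 → ∃ ψ, ψ ∘ₗ g = φ := by
  rw [exact_iff_dual_character (by rw [← LinearMap.rTensor_comp, h, LinearMap.rTensor_zero])]
  have key {X Y : Type u} [AddCommGroup X] [Module R X] [AddCommGroup Y] [Module R Y]
      (k : X →ₗ[R] Y) (φ : Y →ₗ[R] CharacterModule N) :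
      CharacterModule.homEquiv (φ ∘ₗ k) =
        CharacterModule.dual (k.rTensor N) (CharacterModule.homEquiv φ) := by
    rw [← LinearEquiv.eq_symm_apply]
    rfl
  constructor
  · intro H φ hφ
    obtain ⟨ψ, hψ⟩ := H (CharacterModule.homEquiv φ) (by rw [← key, hφ, map_zero])
    refine ⟨CharacterModule.homEquiv.symm ψ, CharacterModule.homEquiv.injective ?_⟩
    rw [key, LinearEquiv.apply_symm_apply, hψ]
  · intro H χ hχ
    obtain ⟨φ, rfl⟩ := CharacterModule.homEquiv.surjective χ
    obtain ⟨ψ, hψ⟩ := H φ (CharacterModule.homEquiv.injective (by rw [key, hχ, map_zero]))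
    exact ⟨CharacterModule.homEquiv ψ, by rw [← key, hψ]⟩

/-- Over a local ring, a finite module without nonzero maps to the character module of a nonzero
finite module vanishes. -/
lemma subsingleton_of_hom_character_eq_zero [IsLocalRing R] [Module.Finite R N] [Nontrivial N]
    (H : Type u) [AddCommGroup H] [Module R H] [Module.Finite R H]
    (h : ∀ φ : H →ₗ[R] CharacterModule N, φ = 0) : Subsingleton H := by
  have hHN : Subsingleton (H ⊗[R] N) := by
    refine subsingleton_of_forall_eq 0 fun x =>
      CharacterModule.eq_zero_of_character_apply fun χ => ?_
    obtain ⟨φ, rfl⟩ := CharacterModule.homEquiv.surjective χ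
    rw [h φ, map_zero]
    rfl
  have hk : Nontrivial (IsLocalRing.ResidueField R ⊗[R] N) := by
    rwa [← not_subsingleton_iff_nontrivial, IsLocalRing.subsingleton_tensorProduct,
      not_subsingleton_iff_nontrivial]
  have : Nontrivial (Module.Dual (IsLocalRing.ResidueField R)
    (IsLocalRing.ResidueField R ⊗[R] N)) := inferInstance
  obtain ⟨ℓ, hℓ⟩ := exists_ne (0 : Module.Dual (IsLocalRing.ResidueField R)
    (IsLocalRing.ResidueField R ⊗[R] N))
  let π : N →ₗ[R] IsLocalRing.ResidueField R :=
    (ℓ.restrictScalars R) ∘ₗ TensorProduct.mk R (IsLocalRing.ResidueField R) N 1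
  have hπ : ∃ n, π n ≠ 0 := by
    by_contra! hc
    refine hℓ (TensorProduct.AlgebraTensorModule.ext fun x n => ?_)
    have : x ⊗ₜ[R] n = x • (1 ⊗ₜ[R] n) := by rw [TensorProduct.smul_tmul', smul_eq_mul, mul_one]
    rw [this, map_smul, map_smul, show ℓ (1 ⊗ₜ[R] n) = 0 from hc n, LinearMap.zero_apply]
  obtain ⟨n, hn⟩ := hπ
  have hsurj : Function.Surjective π := fun y => by
    obtain ⟨r, hr⟩ := IsLocalRing.residue_surjective (y * (π n)⁻¹)
    refine ⟨r • n, ?_⟩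
    rw [map_smul, Algebra.smul_def, IsLocalRing.ResidueField.algebraMap_eq, hr, mul_assoc,
      inv_mul_cancel₀ hn, mul_one]
  rw [← IsLocalRing.subsingleton_tensorProduct (R := R)]
  have := (LinearMap.lTensor_surjective H hsurj).subsingleton
  exact (TensorProduct.comm R _ H).toEquiv.subsingleton

end Character

section Resolution

variable {R : Type u} [CommRing R]

/-- Finite modules over a Noetherian ring have resolutions by finite free modules. -/
lemma exists_finite_free_resolution [IsNoetherianRing R] (M : Type u) [AddCommGroup M] [Module R M]
    [Module.Finite R M] :
    ∃ (n : ℕ → ℕ) (d : ∀ i, (Fin (n (i + 1)) → R) →ₗ[R] (Fin (n i) → R))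
      (ε : (Fin (n 0) → R) →ₗ[R] M), Function.Surjective ε ∧ Function.Exact (d 0) ε ∧
        ∀ i, Function.Exact (d (i + 1)) (d i) := by
  have cover (a : ℕ) (K : Submodule R (Fin a → R)) :
      ∃ (b : ℕ) (d : (Fin b → R) →ₗ[R] (Fin a → R)), LinearMap.range d = K := by
    obtain ⟨b, d, hd⟩ := Module.Finite.exists_fin' R K
    refine ⟨b, K.subtype ∘ₗ d, ?_⟩
    rw [LinearMap.range_comp_of_range_eq_top _ (LinearMap.range_eq_top.2 hd),
      Submodule.range_subtype]
  choose b d hd using cover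
  obtain ⟨n₀, ε, hε⟩ := Module.Finite.exists_fin' R M
  let S : ℕ → Σ a, Submodule R (Fin a → R) := fun i =>
    Nat.rec ⟨n₀, LinearMap.ker ε⟩ (fun _ s => ⟨b s.1 s.2, LinearMap.ker (d s.1 s.2)⟩) i
  refine ⟨fun i => (S i).1, fun i => d (S i).1 (S i).2, ε, hε, ?_, fun i => ?_⟩
  · exact LinearMap.exact_iff.2 (hd _ _).symm
  · exact LinearMap.exact_iff.2 (hd _ _).symm

variable {M : Type u} [AddCommGroup M] [Module R M] {G : ℕ → Type u} [∀ i, AddCommGroup (G i)]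
  [∀ i, Module R (G i)] [∀ i, Module.Projective R (G i)] {d : ∀ i, G (i + 1) →ₗ[R] G i}
  {ε : G 0 →ₗ[R] M}

/-- If `Ext^{i+1}(M, Y) = 0` then `Hom(G, Y)` is exact in degree `i + 1`, for a projective
resolution `G` of `M`. -/
lemma ExtVanish.exists_comp_eq_of_resolution (hε : Function.Surjective ε)
    (hdε : Function.Exact (d 0) ε) (hd : ∀ i, Function.Exact (d (i + 1)) (d i)) {Y : Type u}
    [AddCommGroup Y] [Module R Y] {i : ℕ} (h : ExtVanish R M Y (i + 1)) (φ : G (i + 1) →ₗ[R] Y)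
    (hφ : φ ∘ₗ d (i + 1) = 0) : ∃ ψ, ψ ∘ₗ d i = φ := by
  have hd' (j : ℕ) := (hd j).linearMap_comp_eq_zero
  have hinj (j : ℕ) := (cokernelLift_injective_iff (hd' j)).2 (hd j)
  have shift (j : ℕ) : ∀ k, ExtVanish R M Y (j + k + 1) →
      ExtVanish R (G j ⧸ LinearMap.range (d j)) Y (k + 1) := by
    induction j with
    | zero =>
      intro k hk
      rw [zero_add] at hk
      exact hk.congr_left (hdε.linearEquivOfSurjective hε).symm
    | succ j ih =>
      intro k hk
      exact ExtVanish.left (hinj j) (exact_cokernelLift_mkQ _) (Submodule.mkQ_surjective _)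
        (ExtVanish.of_projective _ _ _) (ih (k + 1) (by rwa [show j + (k + 1) = j + 1 + k by lia]))
  obtain ⟨ψ, hψ⟩ := ExtVanish.exists_extension (hinj i) (exact_cokernelLift_mkQ _)
    (Submodule.mkQ_surjective _) (shift i 0 h) (cokernelLift hφ)
  refine ⟨ψ, ?_⟩
  rw [← cokernelLift_comp_mkQ (hd' i), ← LinearMap.comp_assoc, hψ, cokernelLift_comp_mkQ]

end Resolution

section DualTensorHom

open TensorProduct

variable {R : Type u} [CommRing R] {A B C N : Type u} [AddCommGroup A] [Module R A]
  [AddCommGroup B] [Module R B] [AddCommGroup C] [Module R C] [AddCommGroup N] [Module R N]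

lemma dualTensorHom_rTensor_dualMap (k : A →ₗ[R] B) (x : Module.Dual R B ⊗[R] N) :
    dualTensorHom R A N (k.dualMap.rTensor N x) = dualTensorHom R B N x ∘ₗ k :=
  LinearMap.congr_fun (dualTensorHom_comp_rTensor_dualMap k) x

lemma dualMap_comp_dualMap_eq_zero {k : A →ₗ[R] B} {l : B →ₗ[R] C} (h : l ∘ₗ k = 0) :
    k.dualMap ∘ₗ l.dualMap = 0 := by
  rw [LinearMap.dualMap_comp_dualMap, h]
  ext
  simp

lemma exact_rTensor_dualMap [Module.Finite R A] [Module.Projective R A] [Module.Finite R B]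
    [Module.Projective R B] [Module.Finite R C] [Module.Projective R C] {k : A →ₗ[R] B}
    {l : B →ₗ[R] C} (hkl : l ∘ₗ k = 0)
    (h : ∀ φ : B →ₗ[R] N, φ ∘ₗ k = 0 → ∃ ψ, ψ ∘ₗ l = φ) :
    Function.Exact (l.dualMap.rTensor N) (k.dualMap.rTensor N) := by
  intro x
  constructor
  · intro hx
    obtain ⟨ψ, hψ⟩ := h (dualTensorHom R B N x) (by
      rw [← dualTensorHom_rTensor_dualMap, hx, map_zero])
    obtain ⟨y, rfl⟩ := dualTensorHom_bijective.2 ψ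
    refine ⟨y, dualTensorHom_bijective.1 ?_⟩
    rw [dualTensorHom_rTensor_dualMap, hψ]
  · rintro ⟨y, rfl⟩
    rw [← LinearMap.comp_apply, ← LinearMap.rTensor_comp, dualMap_comp_dualMap_eq_zero hkl,
      LinearMap.rTensor_zero, LinearMap.zero_apply]

/-- `dualTensorHom` is bijective as soon as tensoring with `N` preserves the left exactness of the
dual of a finite projective presentation. -/
lemma dualTensorHom_bijective_of_presentation [Module.Finite R A] [Module.Projective R A]
    [Module.Finite R B] [Module.Projective R B] {k : A →ₗ[R] B} {l : B →ₗ[R] C}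
    (hl : Function.Surjective l) (hkl : l ∘ₗ k = 0)
    (hinj : Function.Injective (l.dualMap.rTensor N))
    (hex : Function.Exact (l.dualMap.rTensor N) (k.dualMap.rTensor N)) :
    Function.Bijective (dualTensorHom R C N) := by
  constructor
  · intro x y hxy
    refine hinj (dualTensorHom_bijective.1 ?_)
    rw [dualTensorHom_rTensor_dualMap, dualTensorHom_rTensor_dualMap, hxy]
  · intro h
    obtain ⟨x, hx⟩ := (dualTensorHom_bijective (R := R) (M := B) (N := N)).2 (h ∘ₗ l)
    obtain ⟨y, rfl⟩ := (hex x).1 (dualTensorHom_bijective.1 (by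
      rw [dualTensorHom_rTensor_dualMap, hx, LinearMap.comp_assoc, hkl, LinearMap.comp_zero,
        map_zero]))
    refine ⟨y, LinearMap.cancel_right hl |>.1 ?_⟩
    rw [← dualTensorHom_rTensor_dualMap, hx]

end DualTensorHom

/-- Over a Noetherian local ring satisfying the two cohomological finiteness conditions, vanishing
of `Ext^i(M, N)` for `i > 0` forces `M* ⊗ N → Hom(M, N)` to be bijective. -/
theorem dualTensorHom_bijective_of_extVanish {R : Type u} [CommRing R] [IsLocalRing R]
    [IsNoetherianRing R] (hR : IsCosyzygyRigid R) (hR' : HasFiniteSelfExtDimension R)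
    {M N : Type u} [AddCommGroup M] [Module R M] [Module.Finite R M] [AddCommGroup N] [Module R N]
    [Module.Finite R N] (h : ∀ i, ExtVanish R M N (i + 1)) :
    Function.Bijective (dualTensorHom R M N) := by
  cases subsingleton_or_nontrivial N with
  | inl hN =>
    exact ⟨Function.injective_of_subsingleton _, fun φ => ⟨0, Subsingleton.elim _ _⟩⟩
  | inr hN =>
    obtain ⟨n, d, ε, hε, hdε, hd⟩ := exists_finite_free_resolution (R := R) M
    have hδ (j : ℕ) : (d (j + 1)).dualMap ∘ₗ (d j).dualMap = 0 :=
      dualMap_comp_dualMap_eq_zero (hd j).linearMap_comp_eq_zero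
    have hD (j : ℕ) := (exact_rTensor_iff_hom_character (N := N) (hδ j)).1
      (exact_rTensor_dualMap (hd j).linearMap_comp_eq_zero fun φ =>
        (h j).exists_comp_eq_of_resolution (G := fun i => Fin (n i) → R) hε hdε hd φ)
    obtain ⟨s, hs⟩ := hR'
    have hsδ (j : ℕ) (hj : s ≤ j) : Function.Exact (d j).dualMap (d (j + 1)).dualMap := fun φ =>
      ⟨fun hφ => (hs M (j + 1) (by lia)).exists_comp_eq_of_resolution
        (G := fun i => Fin (n i) → R) hε hdε hd φ hφ,
        fun ⟨ψ, hψ⟩ => hψ ▸ LinearMap.congr_fun (hδ j) ψ⟩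
    have hex := exact_of_hom_exact (C := fun j => Module.Dual R (Fin (n j) → R)) hR
      (fun H => subsingleton_of_hom_character_eq_zero H) hδ hD hsδ
    have hεd : ε ∘ₗ d 0 = 0 := hdε.linearMap_comp_eq_zero
    have hexε : Function.Exact ε.dualMap (d 0).dualMap :=
      LinearMap.exact_lcomp_of_exact_of_surjective R hdε hε
    obtain ⟨h₁, h₂⟩ := exists_extension_and_exists_factorization
      (C := fun j => Module.Dual R (Fin (n j) → R)) hR hδ hD hex
      (LinearMap.dualMap_injective_of_surjective hε) hexε
    exact dualTensorHom_bijective_of_presentation hε hεd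
      (rTensor_injective_iff_lcomp_surjective.2 h₁)
      ((exact_rTensor_iff_hom_character (dualMap_comp_dualMap_eq_zero hεd)).2 h₂)

theorem stmt_5 (Q : Type u) [CommRing Q] [IsLocalRing Q] (hQ : IsRegularLocal Q)
    (f : List Q) (hf : RingTheory.Sequence.IsRegular Q f)
    (M N : Type u) [AddCommGroup M] [Module (Q ⧸ Ideal.ofList f) M]
    [AddCommGroup N] [Module (Q ⧸ Ideal.ofList f) N]
    [Module.Finite (Q ⧸ Ideal.ofList f) M] [Module.Finite (Q ⧸ Ideal.ofList f) N]
    (hext : ∀ i : ℕ, 0 < i →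
      IsZero (((Ext (Q ⧸ Ideal.ofList f) (ModuleCat.{u} (Q ⧸ Ideal.ofList f)) i).obj
        (Opposite.op (ModuleCat.of (Q ⧸ Ideal.ofList f) M))).obj
        (ModuleCat.of (Q ⧸ Ideal.ofList f) N))) :
    Function.Bijective (dualTensorHom (Q ⧸ Ideal.ofList f) M N) := by
  obtain ⟨_, s, hs, hdim⟩ := hQ
  have : Nontrivial (Q ⧸ Ideal.ofList f) := Ideal.Quotient.nontrivial_iff.2 fun h =>
    hf.top_ne_smul (by rw [h, Submodule.top_smul])
  have : IsLocalRing (Q ⧸ Ideal.ofList f) :=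
    .of_surjective' (Ideal.Quotient.mk _) Ideal.Quotient.mk_surjective
  obtain ⟨hR, hR'⟩ := isCosyzygyRigid_and_hasFiniteSelfExtDimension_of_isRegular s hs hdim f
    hf.toIsWeaklyRegular
  exact dualTensorHom_bijective_of_extVanish hR hR' fun i =>
    extVanish_of_isZero_ext i (hext (i + 1) i.succ_pos)
end

section
/- Let Q be a regular local ring, f₁,…,f_c a Q-regular sequence, and R = Q/(f₁,…,f_c) (a local complete intersection). Let M and N be nonzero finitely generated Cohen–Macaulay R-modules (not necessarily maximal Cohen–Macaulay). If Tor_i^R(M,N) = 0 for all sufficiently large i and dim(M ⊗_R N) + dim R ≤ dim M + dim N, then Tor_i^R(M,N) = 0 for all i > 0. -/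
/-!
STATEMENT 6: Over a local complete intersection `R = Q ⧸ (f₁, …, f_c)`, if `M`, `N` are nonzero
finitely generated Cohen–Macaulay `R`-modules with `Tor_i^R(M, N) = 0` for `i ≫ 0` and
`dim (M ⊗_R N) + dim R ≤ dim M + dim N`, then `Tor_i^R(M, N) = 0` for all `i > 0`.
-/

open CategoryTheory CategoryTheory.Limits

open scoped TensorProduct

universe u

/-- The Krull dimension of a commutative ring, valued in `WithBot ℕ∞`. -/
noncomputable def ringDim (R : Type u) [CommRing R] : WithBot ℕ∞ := ringKrullDim R

/-- The Krull dimension of a module `M`: the Krull dimension of `R ⧸ ann M`. -/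
noncomputable def moduleDim (R : Type u) [CommRing R] (M : Type u) [AddCommGroup M]
    [Module R M] : WithBot ℕ∞ :=
  ringDim (R ⧸ Module.annihilator R M)

/-- The depth of a module over a Noetherian local ring: the supremum of lengths of `M`-regular
sequences of elements of the maximal ideal. -/
noncomputable def moduleDepth (R : Type u) [CommRing R] [IsLocalRing R]
    (M : Type u) [AddCommGroup M] [Module R M] : ℕ∞ :=
  sSup {n : ℕ∞ | ∃ rs : List R, n = (rs.length : ℕ∞) ∧
    (∀ x ∈ rs, x ∈ IsLocalRing.maximalIdeal R) ∧ RingTheory.Sequence.IsRegular M rs}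

open IsLocalRing RingTheory.Sequence
open scoped Pointwise

/-- In a local ring, an element of `𝔪 \ 𝔪²` can be exchanged with one of the generators of `𝔪`. -/
lemma exists_span_image_erase_eq_maximalIdeal_quotient {Q : Type u} [CommRing Q] [IsLocalRing Q]
    [DecidableEq Q] (s : Finset Q) (hs : Ideal.span (s : Set Q) = maximalIdeal Q) {x : Q}
    (hx : x ∈ maximalIdeal Q) (hx2 : x ∉ maximalIdeal Q ^ 2) :
    ∃ a ∈ s, Ideal.map (Ideal.Quotient.mk (Ideal.span {x})) (maximalIdeal Q) =
      Ideal.span ((Ideal.Quotient.mk (Ideal.span {x})) '' (s.erase a : Finset Q)) := by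
  have hxs : x ∈ Submodule.span Q (s : Set Q) := by
    change x ∈ Ideal.span (s : Set Q); rwa [hs]
  obtain ⟨c, -, hc⟩ := Submodule.mem_span_finset.mp hxs
  have : ∃ a ∈ s, IsUnit (c a) := by
    by_contra! h
    refine hx2 (hc ▸ Ideal.sum_mem _ fun a ha => ?_)
    rw [pow_two]
    exact Ideal.mul_mem_mul ((mem_maximalIdeal _).mpr (h a ha))
      (hs ▸ Ideal.subset_span ha)
  obtain ⟨a, ha, hu⟩ := this
  refine ⟨a, ha, ?_⟩
  rw [← hs, Ideal.map_span]
  apply le_antisymm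
  · rw [Ideal.span_le]
    rintro _ ⟨b, hb, rfl⟩
    by_cases hba : b = a
    · subst hba
      have h1 : Ideal.Quotient.mk (Ideal.span {x}) x = 0 :=
        Ideal.Quotient.eq_zero_iff_mem.mpr (Ideal.mem_span_singleton_self x)
      rw [← Finset.add_sum_erase s _ ha] at hc
      replace h1 := (congrArg (Ideal.Quotient.mk (Ideal.span {x})) hc).trans h1
      rw [map_add, smul_eq_mul, map_mul] at h1
      have h2 := eq_neg_of_add_eq_zero_left h1
      have h3 : Ideal.Quotient.mk (Ideal.span {x}) (c b) * Ideal.Quotient.mk (Ideal.span {x}) b ∈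
          Ideal.span ((Ideal.Quotient.mk (Ideal.span {x})) '' (s.erase b : Finset Q)) := by
        rw [h2, map_sum]
        refine neg_mem (Ideal.sum_mem _ fun i hi => ?_)
        rw [smul_eq_mul, map_mul]
        exact Ideal.mul_mem_left _ _ (Ideal.subset_span ⟨i, hi, rfl⟩)
      exact (Ideal.unit_mul_mem_iff_mem _ (hu.map _)).mp h3
    · exact Ideal.subset_span ⟨b, by simpa [hba] using hb, rfl⟩
  · exact Ideal.span_mono (Set.image_mono (by simp))

/-- A Noetherian local ring whose maximal ideal is generated by at most `dim` elements is a domain,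
and its maximal ideal is generated by a regular sequence. -/
theorem isDomain_and_exists_isWeaklyRegular_of_card_le (d : ℕ) :
    ∀ (Q : Type u) [CommRing Q] [IsLocalRing Q] [IsNoetherianRing Q] (s : Finset Q),
      Ideal.span (s : Set Q) = maximalIdeal Q → s.card ≤ d → (d : WithBot ℕ∞) ≤ ringKrullDim Q →
      IsDomain Q ∧ ∃ rs : List Q, rs.length = d ∧ IsWeaklyRegular Q rs ∧
        Ideal.ofList rs = maximalIdeal Q := by
  classical
  induction d with
  | zero =>
    intro Q _ _ _ s hs hcard _
    have hbot : maximalIdeal Q = ⊥ := by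
      rw [← hs, Finset.card_eq_zero.mp (Nat.le_zero.mp hcard)]; simp
    have hf : IsField Q := isField_iff_maximalIdeal_eq.mpr hbot
    exact ⟨hf.isDomain, [], rfl, .nil Q Q, by simp [hbot]⟩
  | succ d ih =>
    intro Q _ _ _ s hs hcard hdim
    have hfin := minimalPrimes.finite_of_isNoetherianRing Q
    obtain ⟨x, hxm, hx⟩ : ∃ x ∈ maximalIdeal Q,
        x ∉ maximalIdeal Q ^ 2 ∧ ∀ P ∈ minimalPrimes Q, x ∉ P := by
      by_contra! h
      have hsub : ((maximalIdeal Q : Ideal Q) : Set Q) ⊆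
          ⋃ i ∈ ((insert (maximalIdeal Q ^ 2) hfin.toFinset : Finset (Ideal Q)) : Set (Ideal Q)),
            ((i : Ideal Q) : Set Q) := by
        intro x hx
        simp only [Finset.mem_insert, Set.Finite.mem_toFinset, Set.mem_iUnion,
          SetLike.mem_coe, exists_prop, exists_eq_or_imp]
        by_cases hx2 : x ∈ maximalIdeal Q ^ 2
        · exact Or.inl hx2
        · exact Or.inr (by simpa using h x hx hx2)
      rw [Ideal.subset_union_prime (f := fun i : Ideal Q => i) (maximalIdeal Q ^ 2)
        (maximalIdeal Q ^ 2) (by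
          intro i hi hne _
          simp only [Finset.mem_insert, hne, Set.Finite.mem_toFinset, false_or] at hi
          exact hi.1.1)] at hsub
      have hpos : ¬ ringKrullDim Q ≤ 0 := fun h0 => by
        have := hdim.trans h0
        norm_cast at this
      obtain ⟨i, hi, hle⟩ := hsub
      apply hpos
      rcases Finset.mem_insert.mp hi with rfl | hi
      · have hbot : maximalIdeal Q = ⊥ := by
          refine Submodule.eq_bot_of_le_smul_of_le_jacobson_bot (maximalIdeal Q) _
            (IsNoetherian.noetherian _) ?_ (maximalIdeal_le_jacobson _)
          rwa [pow_two] at hle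
        rw [ringKrullDim_eq_zero_of_isField (isField_iff_maximalIdeal_eq.mpr hbot)]
      · have hi' : i ∈ minimalPrimes Q := by simpa using hi
        have hP := hi'.1.1
        have : i = maximalIdeal Q := le_antisymm (le_maximalIdeal hP.ne_top) hle
        rw [← maximalIdeal_height_eq_ringKrullDim, ← this]
        have := Ideal.height_eq_zero_iff (I := i) |>.mpr hi'
        simp [this]
    obtain ⟨a, ha, hmap⟩ := exists_span_image_erase_eq_maximalIdeal_quotient s hs hxm hx.1
    have hloc : IsLocalRing (Q ⧸ Ideal.span {x}) := by
      have : Nontrivial (Q ⧸ Ideal.span {x}) := Ideal.Quotient.nontrivial_iff.mpr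
        (fun h => (mem_maximalIdeal x).mp hxm (Ideal.span_singleton_eq_top.mp h))
      exact .of_surjective' _ Ideal.Quotient.mk_surjective
    have hmax : Ideal.map (Ideal.Quotient.mk (Ideal.span {x})) (maximalIdeal Q) =
        maximalIdeal (Q ⧸ Ideal.span {x}) :=
      IsLocalRing.map_maximalIdeal_of_surjective _ Ideal.Quotient.mk_surjective
    obtain ⟨hdom, rs, hlen, hreg, hrs⟩ := ih (Q ⧸ Ideal.span {x})
      ((s.erase a).image (Ideal.Quotient.mk (Ideal.span {x})))
      (by rw [Finset.coe_image, ← hmap, hmax])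
      (Finset.card_image_le.trans (by rw [Finset.card_erase_of_mem ha]; omega))
      (by
        have h1 := ringKrullDim_le_ringKrullDim_quotient_add_card (R := Q) (s := {x})
          (by simpa [IsLocalRing.ringJacobson_eq_maximalIdeal] using hxm)
        rw [Finset.coe_singleton, Finset.card_singleton] at h1
        have h2 := hdim.trans h1
        push_cast at h2
        exact ENat.WithBot.add_le_add_one_right_iff.mp h2)
    have hprime : (Ideal.span {x}).IsPrime := (Ideal.Quotient.isDomain_iff_prime _).mp hdom
    obtain ⟨P, hP, hPx⟩ := Ideal.exists_minimalPrimes_le (bot_le : ⊥ ≤ Ideal.span {x})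
    have hPbot : P = ⊥ := by
      refine Submodule.eq_bot_of_le_smul_of_le_jacobson_bot (maximalIdeal Q) _
        (IsNoetherian.noetherian _) (fun y hy => ?_) (maximalIdeal_le_jacobson _)
      obtain ⟨z, rfl⟩ := Ideal.mem_span_singleton'.mp (hPx hy)
      have := (hP.1.1.mem_or_mem hy).resolve_right (hx.2 P hP)
      rw [mul_comm]
      exact Submodule.smul_mem_smul hxm this
    have hQ : IsDomain Q := by
      have := hP.1.1
      rw [hPbot] at this
      exact IsDomain.of_bot_isPrime Q
    refine ⟨hQ, ?_⟩
    obtain ⟨rs, rfl⟩ := List.map_surjective_iff.mpr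
      (Ideal.Quotient.mk_surjective (I := Ideal.span {x})) rs
    refine ⟨x :: rs, by simpa using hlen, ?_, ?_⟩
    · have hx0 : x ≠ 0 := fun h => hx.1 (h ▸ zero_mem _)
      refine .cons (isRegular_iff_ne_zero.mpr hx0).left.isSMulRegular ?_
      have e : QuotSMulTop x Q ≃ₗ[Q] Q ⧸ Ideal.span {x} :=
        Submodule.quotEquivOfEq _ _ (by rw [← Submodule.ideal_span_singleton_smul]; simp)
      rw [e.isWeaklyRegular_congr]
      exact (isWeaklyRegular_map_algebraMap_iff (Q ⧸ Ideal.span {x}) (Q ⧸ Ideal.span {x}) rs).mp hreg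
    · rw [Ideal.ofList_cons]
      have h1 := congrArg (Ideal.comap (Ideal.Quotient.mk (Ideal.span {x}))) hrs
      rw [← hmax, ← Ideal.map_ofList, Ideal.comap_map_of_surjective _ Ideal.Quotient.mk_surjective,
        Ideal.comap_map_of_surjective _ Ideal.Quotient.mk_surjective,
        ← RingHom.ker_eq_comap_bot, Ideal.mk_ker] at h1
      rw [sup_comm, h1, sup_eq_left, Ideal.span_singleton_le_iff_mem]
      exact hxm

/-- If the residue field of a Noetherian local ring has projective dimension at most `d`, so does
every finitely generated module. -/
theorem hasProjectiveDimensionLE_of_residue {Q : Type u} [CommRing Q] [IsLocalRing Q]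
    [IsNoetherianRing Q] (d : ℕ)
    (hk : HasProjectiveDimensionLE (ModuleCat.of Q (Q ⧸ maximalIdeal Q)) d) (I : Ideal Q) :
    ∀ (A : Type u) [AddCommGroup A] [Module Q A] [Module.Finite Q A],
      I ≤ Module.annihilator Q A → HasProjectiveDimensionLE (ModuleCat.of Q A) d := by
  induction I using WellFoundedGT.induction with
  | ind I ih =>
  intro A _ _ hA
  induction hA using IsNoetherianRing.induction_on_isQuotientEquivQuotientPrime Q with
  | subsingleton N =>
    intro _
    have : IsZero (ModuleCat.of Q N) := ModuleCat.isZero_of_subsingleton _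
    have : HasProjectiveDimensionLT (ModuleCat.of Q N) 0 := this.hasProjectiveDimensionLT_zero
    exact hasProjectiveDimensionLT_of_ge _ 0 _ (by simp)
  | quotient N p e =>
    intro hN
    rw [e.annihilator_eq, Ideal.annihilator_quotient] at hN
    suffices HasProjectiveDimensionLE (ModuleCat.of Q (Q ⧸ p.1)) d from
      hasProjectiveDimensionLT_of_iso (X := ModuleCat.of Q (Q ⧸ p.1)) e.symm.toModuleIso _
    by_cases hp : p.1 = maximalIdeal Q
    · rw [hp]; exact hk
    obtain ⟨x, hxm, hxp⟩ := SetLike.exists_of_lt (lt_of_le_of_ne (le_maximalIdeal p.2.ne_top) hp)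
    have hreg : IsSMulRegular (Q ⧸ p.1) x := by
      intro a b hab
      obtain ⟨a, rfl⟩ := Ideal.Quotient.mk_surjective a
      obtain ⟨b, rfl⟩ := Ideal.Quotient.mk_surjective b
      simp only [Algebra.smul_def, Ideal.Quotient.algebraMap_eq, ← map_mul, Ideal.Quotient.eq] at hab ⊢
      rw [← mul_sub] at hab
      exact (p.2.mem_or_mem hab).resolve_left hxp
    have h1 := ih (I ⊔ Ideal.span {x}) (lt_of_le_of_ne le_sup_left (fun h => hxp (hN (h ▸
      Ideal.mem_sup_right (Ideal.mem_span_singleton_self x))))) (QuotSMulTop x (Q ⧸ p.1))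
      (sup_le (fun r hr => Module.mem_annihilator.mpr fun m => by
          obtain ⟨m, rfl⟩ := Submodule.Quotient.mk_surjective _ m
          obtain ⟨m, rfl⟩ := Ideal.Quotient.mk_surjective m
          have : r • (Ideal.Quotient.mk p.1 m) = 0 := by
            rw [Algebra.smul_def, Ideal.Quotient.algebraMap_eq, ← map_mul,
              Ideal.Quotient.eq_zero_iff_mem]
            exact Ideal.mul_mem_right _ _ (hN hr)
          rw [← Submodule.Quotient.mk_smul, this, Submodule.Quotient.mk_zero])
        ((Ideal.span_singleton_le_iff_mem _).mpr (Module.mem_annihilator.mpr fun m => by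
          obtain ⟨m, rfl⟩ := Submodule.Quotient.mk_surjective _ m
          rw [← Submodule.Quotient.mk_smul, Submodule.Quotient.mk_eq_zero]
          exact Submodule.smul_mem_pointwise_smul _ _ _ trivial)))
    rw [← projectiveDimension_le_iff] at h1 ⊢
    rw [ModuleCat.projectiveDimension_quotSMulTop_eq_succ_of_isSMulRegular
      (ModuleCat.of Q (Q ⧸ p.1)) x hreg hxm] at h1
    refine le_trans ?_ h1
    exact le_add_of_nonneg_right zero_le_one
  | exact N₁ N₂ N₃ f g hf hg hfg h₁ h₃ =>
    intro hN
    have h1 := h₁ (hN.trans (f.annihilator_le_of_injective hf))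
    have h3 := h₃ (hN.trans (g.annihilator_le_of_surjective hg))
    let S : ShortComplex (ModuleCat.{u} Q) :=
      ShortComplex.mk (ModuleCat.ofHom f) (ModuleCat.ofHom g) (by
        ext x; exact hfg.apply_apply_eq_zero x)
    have hS : S.ShortExact :=
      { exact := (ShortComplex.ShortExact.moduleCat_exact_iff_function_exact S).mpr hfg
        mono_f := (ModuleCat.mono_iff_injective _).mpr hf
        epi_g := (ModuleCat.epi_iff_surjective _).mpr hg }
    exact hS.hasProjectiveDimensionLT_X₂ (d + 1) h1 h3

/-- A finitely generated module over a regular local ring admitting a regular sequence of length `n`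
has projective dimension at most `d - n`. -/
theorem projectiveDimension_add_length_le {Q : Type u} [CommRing Q] [IsLocalRing Q]
    [IsNoetherianRing Q] (d : ℕ) (s : Finset Q)
    (hs : Ideal.span (s : Set Q) = maximalIdeal Q) (hcard : s.card ≤ d)
    (hd : (d : WithBot ℕ∞) ≤ ringKrullDim Q)
    (N : Type u) [AddCommGroup N] [Module Q N] [Module.Finite Q N] [Nontrivial N]
    (rs : List Q) (hrs : IsWeaklyRegular N rs) (hmem : ∀ r ∈ rs, r ∈ maximalIdeal Q) :
    projectiveDimension (ModuleCat.of Q N) + rs.length ≤ d := by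
  obtain ⟨-, xs, hlen, hreg, hxs⟩ := isDomain_and_exists_isWeaklyRegular_of_card_le d Q s hs hcard hd
  have hxm : ∀ r ∈ xs, r ∈ maximalIdeal Q := fun r hr => hxs ▸ Ideal.subset_span hr
  have hk : HasProjectiveDimensionLE (ModuleCat.of Q (Q ⧸ maximalIdeal Q)) d := by
    rw [← projectiveDimension_le_iff]
    have h := ModuleCat.projectiveDimension_quotient_eq_add_length_of_isWeaklyRegular
      (ModuleCat.of Q Q) xs hreg hxm
    have h0 : projectiveDimension (ModuleCat.of Q Q) = 0 :=
      ModuleCat.projectiveDimension_eq_zero_of_projective _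
    rw [hlen, h0, zero_add] at h
    rw [← h]
    refine (projectiveDimension_eq_of_iso (LinearEquiv.toModuleIso
      (Submodule.quotEquivOfEq _ _ ?_))).le
    rw [hxs]
    simp
  have h2 := ModuleCat.projectiveDimension_quotient_eq_add_length_of_isWeaklyRegular
      (ModuleCat.of Q N) rs hrs hmem
  rw [← h2, projectiveDimension_le_iff]
  exact hasProjectiveDimensionLE_of_residue d hk ⊥ _ bot_le

/-- The dimension of an associated prime bounds the length of a regular sequence. -/
theorem length_le_ringKrullDim_quotient_of_isAssociatedPrime {Q : Type u} [CommRing Q]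
    [IsLocalRing Q] [IsNoetherianRing Q] (rs : List Q) :
    ∀ (M : Type u) [AddCommGroup M] [Module Q M] [Module.Finite Q M] (P : Ideal Q),
      IsWeaklyRegular M rs → (∀ r ∈ rs, r ∈ maximalIdeal Q) → IsAssociatedPrime P M →
      (rs.length : WithBot ℕ∞) ≤ ringKrullDim (Q ⧸ P) := by
  induction rs with
  | nil =>
    intro M _ _ _ P _ _ hP
    have := hP.isPrime
    simpa using ringKrullDim_nonneg_of_nontrivial
  | cons x rs ih =>
    intro M _ _ _ P hreg hmem hP
    have hPp := hP.isPrime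
    rw [isWeaklyRegular_cons_iff] at hreg
    simp only [List.mem_cons, forall_eq_or_imp] at hmem
    obtain ⟨z, hz⟩ := (isAssociatedPrime_iff.mp hP).2
    have hz' (r : Q) : r ∈ P ↔ r • z = 0 := by rw [hz]; simp [Submodule.mem_colon_singleton]
    have hz0 : z ≠ 0 := fun h => hPp.ne_top ((Ideal.eq_top_iff_one P).mpr ((hz' 1).mpr (by simp [h])))
    let L : Submodule Q M :=
      { carrier := {w | ∀ r ∈ P, r • w = 0}
        add_mem' := fun ha hb r hr => by rw [smul_add, ha r hr, hb r hr, add_zero]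
        zero_mem' := fun r _ => smul_zero r
        smul_mem' := fun c w hw r hr => by rw [smul_comm, hw r hr, smul_zero] }
    obtain ⟨w, hwL, hwx⟩ : ∃ w ∈ L, w ∉ x • (⊤ : Submodule Q M) := by
      by_contra! h
      have hL : L = ⊥ := by
        refine Submodule.eq_bot_of_le_smul_of_le_jacobson_bot (maximalIdeal Q) _
          (IsNoetherian.noetherian _) (fun y hy => ?_) (maximalIdeal_le_jacobson _)
        obtain ⟨v, -, rfl⟩ := h y hy
        refine Submodule.smul_mem_smul hmem.1 (fun r hr => hreg.1 ?_)
        have := hy r hr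
        simp only [DistribSMul.toLinearMap_apply] at this
        simp only [smul_zero]
        rw [smul_comm, this]
      have : z ∈ L := fun r hr => (hz' r).mp hr
      rw [hL] at this
      exact hz0 this
    obtain ⟨P', hP', hle⟩ := exists_le_isAssociatedPrime_of_isNoetherianRing Q
      (Submodule.Quotient.mk w : QuotSMulTop x M) (by rwa [Ne, Submodule.Quotient.mk_eq_zero])
    have hPP' : P ≤ P' := fun r hr => hle (by
      rw [Submodule.mem_colon_singleton, ← Submodule.Quotient.mk_smul, hwL r hr]; simp)
    have hxP' : x ∈ P' := hle (by
      rw [Submodule.mem_colon_singleton, ← Submodule.Quotient.mk_smul, Submodule.mem_bot,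
        Submodule.Quotient.mk_eq_zero]
      exact Submodule.smul_mem_pointwise_smul _ _ _ trivial)
    have hxP : x ∉ P := fun h => hz0 (hreg.1 (by simpa using (hz' x).mp h))
    have h1 := ih (QuotSMulTop x M) P' hreg.2 hmem.2 hP'
    have h2 := ringKrullDim_succ_le_of_surjective (Ideal.Quotient.factor hPP')
      (Ideal.Quotient.factor_surjective hPP') (r := Ideal.Quotient.mk P x)
      (mem_nonZeroDivisors_of_ne_zero (by rwa [Ne, Ideal.Quotient.eq_zero_iff_mem]))
      (by rw [Ideal.Quotient.factor_mk, Ideal.Quotient.eq_zero_iff_mem]; exact hxP')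
    rw [List.length_cons, Nat.cast_add, Nat.cast_one]
    exact le_trans (by gcongr) h2

/-- Dividing by a regular element lowers the depth by at most one. -/
theorem exists_isRegular_quotSMulTop {Q : Type u} [CommRing Q]
    [IsLocalRing Q] [IsNoetherianRing Q] (M : Type u) [AddCommGroup M] [Module Q M]
    [Module.Finite Q M] (x : Q) (hx : x ∈ maximalIdeal Q) (hxM : IsSMulRegular M x) (rs : List Q)
    (hrs : IsRegular M rs) (hmem : ∀ r ∈ rs, r ∈ maximalIdeal Q) (n : ℕ) (hn : rs.length = n + 1) :
    ∃ ys : List Q, ys.length = n ∧ (∀ r ∈ ys, r ∈ maximalIdeal Q) ∧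
      IsRegular (QuotSMulTop x M) ys := by
  have : Nontrivial M := hrs.nontrivial
  have := nontrivial_quotSMulTop_of_mem_maximalIdeal M hx
  have hlt (A : Type u) [AddCommGroup A] [Module Q A] [Module.Finite Q A] [Nontrivial A] :
      maximalIdeal Q • (⊤ : Submodule Q A) < ⊤ :=
    Ne.lt_top (Ne.symm (Submodule.top_ne_ideal_smul_of_le_jacobson_annihilator
      (maximalIdeal_le_jacobson _)))
  have h1 : ∀ i < n + 1, Subsingleton (Abelian.Ext
      (ModuleCat.of Q (Shrink.{u} (Q ⧸ maximalIdeal Q))) (ModuleCat.of Q M) i) :=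
    ((ModuleCat.exists_isRegular_tfae (maximalIdeal Q) (n + 1) (ModuleCat.of Q M)
      (hlt M)).out 3 1 rfl rfl).mp ⟨rs, hn, hmem, hrs⟩
  refine ((ModuleCat.exists_isRegular_tfae (maximalIdeal Q) n
    (ModuleCat.of Q (QuotSMulTop x M)) (hlt _)).out 1 3).mp fun i hi => ?_
  have zero1 := AddCommGrpCat.isZero_of_iff_subsingleton.mpr (h1 i (by lia))
  have zero2 := AddCommGrpCat.isZero_of_iff_subsingleton.mpr (h1 (i + 1) (by lia))
  exact AddCommGrpCat.subsingleton_of_isZero <| ShortComplex.Exact.isZero_of_both_zeros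
    ((Abelian.Ext.covariant_sequence_exact₃' _
      (IsSMulRegular.smulShortComplex_shortExact (M := ModuleCat.of Q M) hxM)) i (i + 1) rfl)
    (zero1.eq_zero_of_src _) (zero2.eq_zero_of_tgt _)

/-- A prime `p` with `dim Q/p ≤ t` contains a regular sequence of length `depth M - t`. -/
theorem exists_isWeaklyRegular_mem_of_ringKrullDim_quotient_le {Q : Type u} [CommRing Q]
    [IsLocalRing Q] [IsNoetherianRing Q] (p : Ideal Q) [p.IsPrime] (t : ℕ)
    (ht : ringKrullDim (Q ⧸ p) ≤ t) (l : ℕ) :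
    ∀ (M : Type u) [AddCommGroup M] [Module Q M] [Module.Finite Q M] (rs : List Q),
      IsRegular M rs → (∀ r ∈ rs, r ∈ maximalIdeal Q) → t + l = rs.length →
      ∃ ys : List Q, ys.length = l ∧ (∀ r ∈ ys, r ∈ p) ∧ IsWeaklyRegular M ys := by
  induction l with
  | zero => exact fun M _ _ _ rs _ _ _ => ⟨[], rfl, by simp, .nil _ _⟩
  | succ l ih =>
    intro M _ _ _ rs hrs hmem hlen
    have : ∃ x ∈ p, IsSMulRegular M x := by
      by_contra! h
      have hsub : (p : Set Q) ⊆ ⋃ i ∈ associatedPrimes Q M, (i : Set Q) := by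
        rw [biUnion_associatedPrimes_eq_compl_regular]
        exact h
      obtain ⟨P, hP, hpP⟩ := (Ideal.subset_union_prime_finite (associatedPrimes.finite Q M)
        (f := fun i : Ideal Q => i) ⊥ ⊥ fun i hi _ _ => hi.isPrime).mp hsub
      have h1 := length_le_ringKrullDim_quotient_of_isAssociatedPrime rs M P hrs.1 hmem hP
      have h2 := ringKrullDim_le_of_surjective (Ideal.Quotient.factor hpP)
        (Ideal.Quotient.factor_surjective hpP)
      have h3 := (h1.trans h2).trans ht
      norm_cast at h3
      lia
    obtain ⟨x, hxp, hx⟩ := this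
    have hxm := le_maximalIdeal (Ideal.IsPrime.ne_top ‹_›) hxp
    obtain ⟨zs, hzl, hzm, hz⟩ := exists_isRegular_quotSMulTop M x hxm hx rs hrs hmem (t + l) hlen.symm
    obtain ⟨ys, hyl, hym, hy⟩ := ih (QuotSMulTop x M) zs hz hzm hzl.symm
    exact ⟨x :: ys, by simp [hyl], by simpa using ⟨hxp, hym⟩, .cons hx hy⟩

section ChainComplexFunctor

variable {C D : Type*} [Category* C] [Category* D] [Abelian C] [Abelian D]

lemma ChainComplex.exactAt_succ_mapHomologicalComplex (F : C ⥤ D) [F.Additive]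
    (hF : ∀ S : ShortComplex C, S.Exact → (S.map F).Exact) (K : ChainComplex C ℕ) (i : ℕ)
    (h : K.ExactAt (i + 1)) : ((F.mapHomologicalComplex _).obj K).ExactAt (i + 1) := by
  have h1 := (HomologicalComplex.exactAt_iff' K (i + 2) (i + 1) i (by simp) (by simp)).mp h
  exact (HomologicalComplex.exactAt_iff' ((F.mapHomologicalComplex _).obj K) (i + 2) (i + 1) i
    (by simp) (by simp)).mpr (hF _ h1)

variable {X : C} (P : ProjectiveResolution X)

lemma CategoryTheory.ProjectiveResolution.opcyclesMap_fromLeftDerivedZero' {F G : C ⥤ D}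
    [F.Additive] [G.Additive] (α : F ⟶ G) :
    HomologicalComplex.opcyclesMap ((NatTrans.mapHomologicalComplex α _).app P.complex) 0 ≫
      P.fromLeftDerivedZero' G = P.fromLeftDerivedZero' F ≫ α.app X := by
  rw [← cancel_epi (HomologicalComplex.pOpcycles _ _), HomologicalComplex.p_opcyclesMap_assoc,
    ProjectiveResolution.pOpcycles_comp_fromLeftDerivedZero',
    ProjectiveResolution.pOpcycles_comp_fromLeftDerivedZero'_assoc]
  exact (α.naturality (P.π.f 0)).symm

/-- The zeroth homology of a right exact functor applied to a projective resolution. -/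
noncomputable def CategoryTheory.ProjectiveResolution.homologyZeroIso (F : C ⥤ D) [F.Additive]
    [PreservesFiniteColimits F] :
    ((F.mapHomologicalComplex _).obj P.complex).homology 0 ≅ F.obj X :=
  ChainComplex.isoHomologyι₀ _ ≪≫ asIso (P.fromLeftDerivedZero' F)

lemma CategoryTheory.ProjectiveResolution.homologyZeroIso_hom_naturality {F G : C ⥤ D}
    [F.Additive] [G.Additive] [PreservesFiniteColimits F] [PreservesFiniteColimits G] (α : F ⟶ G) :
    HomologicalComplex.homologyMap ((NatTrans.mapHomologicalComplex α _).app P.complex) 0 ≫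
      (P.homologyZeroIso G).hom = (P.homologyZeroIso F).hom ≫ α.app X := by
  have h := P.opcyclesMap_fromLeftDerivedZero' α
  simp only [homologyZeroIso, Iso.trans_hom, asIso_hom, Category.assoc, ← h]
  exact HomologicalComplex.homologyι_naturality_assoc _ _ _

end ChainComplexFunctor

section TorFunctor

open MonoidalCategory

variable {R : Type u} [CommRing R]

/-- The functor `M ↦ M ⊗ P`, for a fixed chain complex `P`. -/
noncomputable def tensorComplex (P : ChainComplex (ModuleCat.{u} R) ℕ) :
    ModuleCat.{u} R ⥤ ChainComplex (ModuleCat.{u} R) ℕ where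
  obj M := (((tensoringLeft (ModuleCat.{u} R)).obj M).mapHomologicalComplex _).obj P
  map f := (NatTrans.mapHomologicalComplex ((tensoringLeft (ModuleCat.{u} R)).map f) _).app P
  map_id M := by ext i; simp
  map_comp f g := by ext i; simp

instance (P : ChainComplex (ModuleCat.{u} R) ℕ) : (tensorComplex P).Linear R where
  map_smul {X Y} f r := by
    apply HomologicalComplex.hom_ext
    intro i
    exact MonoidalLinear.smul_whiskerRight r f _

instance (P : ChainComplex (ModuleCat.{u} R) ℕ) : (tensorComplex P).Additive where
  map_add {X Y f g} := by
    apply HomologicalComplex.hom_ext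
    intro i
    exact MonoidalPreadditive.add_whiskerRight f g

/-- Tensoring a short exact sequence with a complex of flat modules. -/
lemma tensorComplex_shortExact (P : ChainComplex (ModuleCat.{u} R) ℕ)
    (hP : ∀ i, Module.Flat R (P.X i)) {S : ShortComplex (ModuleCat.{u} R)} (hS : S.ShortExact) :
    (S.map (tensorComplex P)).ShortExact := by
  apply HomologicalComplex.shortExact_of_degreewise_shortExact
  intro i
  have := hP i
  exact hS.map_of_exact (tensorRight (P.X i))

/-- `Tor` as a functor of the first variable. -/
noncomputable def torFunctor (N : ModuleCat.{u} R) (i : ℕ) : ModuleCat.{u} R ⥤ ModuleCat.{u} R :=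
  tensorComplex (projectiveResolution N).complex ⋙ HomologicalComplex.homologyFunctor _ _ i

lemma flat_projectiveResolution (N : ModuleCat.{u} R) (i : ℕ) :
    Module.Flat R ((projectiveResolution N).complex.X i) := by
  have h : Projective ((projectiveResolution N).complex.X i) := (projectiveResolution N).projective i
  have : Module.Projective R ((projectiveResolution N).complex.X i) :=
    (IsProjective.iff_projective _).mpr h
  infer_instance

/-- Comparison of `torFunctor` with `Tor`. -/
noncomputable def torFunctorObjIso (M N : ModuleCat.{u} R) (i : ℕ) :
    ((Tor (ModuleCat.{u} R) i).obj M).obj N ≅ (torFunctor N i).obj M :=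
  (projectiveResolution N).isoLeftDerivedObj ((tensoringLeft (ModuleCat.{u} R)).obj M) i

lemma isZero_torFunctor_obj_succ_of_flat (M N : ModuleCat.{u} R) [Module.Flat R M] (i : ℕ) :
    IsZero ((torFunctor N (i + 1)).obj M) :=
  (ChainComplex.exactAt_succ_mapHomologicalComplex ((tensoringLeft (ModuleCat.{u} R)).obj M)
    (Module.Flat.lTensor_shortComplex_exact M) _ i
    ((projectiveResolution N).complex_exactAt_succ i)).isZero_homology

instance (M : ModuleCat.{u} R) : PreservesFiniteColimits ((tensoringLeft (ModuleCat.{u} R)).obj M) :=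
  inferInstanceAs (PreservesFiniteColimits (tensorLeft M))

/-- `Tor₀` is the tensor product. -/
noncomputable def torFunctorZeroIso (N : ModuleCat.{u} R) : torFunctor N 0 ≅ tensorRight N :=
  NatIso.ofComponents (fun _ => (projectiveResolution N).homologyZeroIso _)
    fun f => (projectiveResolution N).homologyZeroIso_hom_naturality
      ((tensoringLeft (ModuleCat.{u} R)).map f)

instance (N : ModuleCat.{u} R) (i : ℕ) : (torFunctor N i).Linear R where
  map_smul f r := by
    have h : (torFunctor N i).map (r • f) = HomologicalComplex.homologyMap
        ((tensorComplex (projectiveResolution N).complex).map (r • f)) i := rfl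
    rw [h, Functor.map_smul]
    exact ShortComplex.homologyMap_smul ((HomologicalComplex.shortComplexFunctor _ _ i).map
      ((tensorComplex (projectiveResolution N).complex).map f)) r

end TorFunctor

section TorModule

variable (R : Type u) [CommRing R]

/-- The module `Tor_i(M, N)`. -/
abbrev TorModule (i : ℕ) (M N : Type u) [AddCommGroup M] [Module R M] [AddCommGroup N]
    [Module R N] : Type u :=
  (torFunctor (ModuleCat.of R N) i).obj (ModuleCat.of R M)

variable {R} {M M' A B C : Type u} [AddCommGroup M] [Module R M] [AddCommGroup M'] [Module R M']
  [AddCommGroup A] [Module R A] [AddCommGroup B] [Module R B] [AddCommGroup C] [Module R C]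
  (N : Type u) [AddCommGroup N] [Module R N]

/-- The map on `Tor_i` induced by a linear map in the first variable. -/
noncomputable def torMap (i : ℕ) (f : M →ₗ[R] M') : TorModule R i M N →ₗ[R] TorModule R i M' N :=
  ((torFunctor (ModuleCat.of R N) i).map (ModuleCat.ofHom f)).hom

@[simp]
lemma torMap_lsmul (i : ℕ) (x : R) :
    torMap N i (LinearMap.lsmul R M x) = LinearMap.lsmul R (TorModule R i M N) x := by
  have h : ModuleCat.ofHom (LinearMap.lsmul R M x) = x • 𝟙 (ModuleCat.of R M) := rfl
  simp only [torMap]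
  rw [h, Functor.map_smul, CategoryTheory.Functor.map_id]
  rfl

/-- The zeroth `Tor` is the tensor product. -/
noncomputable def torZeroEquiv (M : Type u) [AddCommGroup M] [Module R M] :
    TorModule R 0 M N ≃ₗ[R] M ⊗[R] N :=
  ((torFunctorZeroIso (ModuleCat.of R N)).app (ModuleCat.of R M)).toLinearEquiv

lemma torZeroEquiv_torMap (f : M →ₗ[R] M') (t : TorModule R 0 M N) :
    torZeroEquiv N M' (torMap N 0 f t) = f.rTensor N (torZeroEquiv N M t) :=
  congr($((torFunctorZeroIso (ModuleCat.of R N)).hom.naturality (ModuleCat.ofHom f)).hom t)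

lemma subsingleton_torModule_succ_of_flat (i : ℕ) [Module.Flat R M] :
    Subsingleton (TorModule R (i + 1) M N) :=
  ModuleCat.subsingleton_of_isZero
    (isZero_torFunctor_obj_succ_of_flat (ModuleCat.of R M) (ModuleCat.of R N) i)

/-- The long exact sequence for `Tor` in the first variable. -/
lemma exists_torDelta {f : A →ₗ[R] B} {g : B →ₗ[R] C} (hf : Function.Injective f)
    (hg : Function.Surjective g) (hfg : Function.Exact f g) (i : ℕ) :
    ∃ δ : TorModule R (i + 1) C N →ₗ[R] TorModule R i A N,
      Function.Exact (torMap N (i + 1) g) δ ∧ Function.Exact δ (torMap N i f) := by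
  let S : ShortComplex (ModuleCat.{u} R) := ShortComplex.mk (ModuleCat.ofHom f) (ModuleCat.ofHom g)
    (by ext x; exact hfg.apply_apply_eq_zero x)
  have hS : S.ShortExact :=
    { exact := (ShortComplex.ShortExact.moduleCat_exact_iff_function_exact S).mpr hfg
      mono_f := (ModuleCat.mono_iff_injective _).mpr hf
      epi_g := (ModuleCat.epi_iff_surjective _).mpr hg }
  have h := tensorComplex_shortExact (projectiveResolution (ModuleCat.of R N)).complex
    (flat_projectiveResolution _) hS
  refine ⟨(h.δ (i + 1) i (by simp)).hom, ?_, ?_⟩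
  · exact (ShortComplex.ShortExact.moduleCat_exact_iff_function_exact _).mp
      (h.homology_exact₃ (i + 1) i (by simp))
  · exact (ShortComplex.ShortExact.moduleCat_exact_iff_function_exact _).mp
      (h.homology_exact₁ (i + 1) i (by simp))

lemma torMap_exact {f : A →ₗ[R] B} {g : B →ₗ[R] C} (hf : Function.Injective f)
    (hg : Function.Surjective g) (hfg : Function.Exact f g) (i : ℕ) :
    Function.Exact (torMap N i f) (torMap N i g) := by
  let S : ShortComplex (ModuleCat.{u} R) := ShortComplex.mk (ModuleCat.ofHom f) (ModuleCat.ofHom g)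
    (by ext x; exact hfg.apply_apply_eq_zero x)
  have hS : S.ShortExact :=
    { exact := (ShortComplex.ShortExact.moduleCat_exact_iff_function_exact S).mpr hfg
      mono_f := (ModuleCat.mono_iff_injective _).mpr hf
      epi_g := (ModuleCat.epi_iff_surjective _).mpr hg }
  have h := tensorComplex_shortExact (projectiveResolution (ModuleCat.of R N)).complex
    (flat_projectiveResolution _) hS
  exact (ShortComplex.ShortExact.moduleCat_exact_iff_function_exact _).mp (h.homology_exact₂ i)

end TorModule

section TorModuleShift

variable {R : Type u} [CommRing R]

lemma Function.Exact.nonempty_equiv_ker {W X Y Z : Type*} [AddCommGroup W] [Module R W]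
    [AddCommGroup X] [Module R X] [AddCommGroup Y] [Module R Y] [AddCommGroup Z] [Module R Z]
    [Subsingleton W] {f : W →ₗ[R] X} {g : X →ₗ[R] Y} {h : Y →ₗ[R] Z}
    (hfg : Function.Exact f g) (hgh : Function.Exact g h) :
    Nonempty (X ≃ₗ[R] LinearMap.ker h) := by
  have hg : Function.Injective g := by
    rw [← LinearMap.ker_eq_bot, hfg.linearMap_ker_eq, LinearMap.range_eq_bot]
    exact Subsingleton.elim _ _
  exact ⟨(LinearEquiv.ofInjective g hg).trans (LinearEquiv.ofEq _ _ hgh.linearMap_ker_eq.symm)⟩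

lemma Function.Exact.nonempty_equiv {W X Y Z : Type*} [AddCommGroup W] [Module R W]
    [AddCommGroup X] [Module R X] [AddCommGroup Y] [Module R Y] [AddCommGroup Z] [Module R Z]
    [Subsingleton W] [Subsingleton Z] {f : W →ₗ[R] X} {g : X →ₗ[R] Y} {h : Y →ₗ[R] Z}
    (hfg : Function.Exact f g) (hgh : Function.Exact g h) : Nonempty (X ≃ₗ[R] Y) := by
  obtain ⟨e⟩ := hfg.nonempty_equiv_ker hgh
  have : LinearMap.ker h = ⊤ := LinearMap.ker_eq_top.mpr (Subsingleton.elim _ _)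
  exact ⟨e.trans (LinearEquiv.ofTop _ this)⟩

lemma Function.Exact.subsingleton {X Y Z : Type*} [AddCommGroup X] [AddCommGroup Y]
    [AddCommGroup Z] [Module R X] [Module R Y] [Module R Z]
    [Subsingleton X] [Subsingleton Z] {f : X →ₗ[R] Y} {g : Y →ₗ[R] Z}
    (hfg : Function.Exact f g) : Subsingleton Y := by
  refine subsingleton_of_forall_eq 0 fun y => ?_
  obtain ⟨x, rfl⟩ := (hfg y).mp (Subsingleton.elim _ _)
  rw [Subsingleton.elim x 0, map_zero]

variable {M A B C : Type u} [AddCommGroup M] [Module R M]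
  [AddCommGroup A] [Module R A] [AddCommGroup B] [Module R B] [AddCommGroup C] [Module R C]
  (N : Type u) [AddCommGroup N] [Module R N]

lemma nonempty_torModule_succ_succ_equiv_of_flat [Module.Flat R B] {f : A →ₗ[R] B} {g : B →ₗ[R] C}
    (hf : Function.Injective f) (hg : Function.Surjective g) (hfg : Function.Exact f g) (i : ℕ) :
    Nonempty (TorModule R (i + 2) C N ≃ₗ[R] TorModule R (i + 1) A N) := by
  obtain ⟨δ, h1, h2⟩ := exists_torDelta N hf hg hfg (i + 1)
  have := subsingleton_torModule_succ_of_flat (R := R) (M := B) N (i + 1)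
  have := subsingleton_torModule_succ_of_flat (R := R) (M := B) N i
  exact h1.nonempty_equiv h2

lemma nonempty_torModule_one_equiv_ker_of_flat [Module.Flat R B] {f : A →ₗ[R] B} {g : B →ₗ[R] C}
    (hf : Function.Injective f) (hg : Function.Surjective g) (hfg : Function.Exact f g) :
    Nonempty (TorModule R 1 C N ≃ₗ[R] LinearMap.ker (f.rTensor N)) := by
  obtain ⟨δ, h1, h2⟩ := exists_torDelta N hf hg hfg 0
  have := subsingleton_torModule_succ_of_flat (R := R) (M := B) N 0
  have h3 : Function.Exact ((torZeroEquiv N A).toLinearMap ∘ₗ δ) (f.rTensor N) := by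
    intro t
    obtain ⟨t, rfl⟩ := (torZeroEquiv N A).surjective t
    rw [← torZeroEquiv_torMap, LinearEquiv.map_eq_zero_iff, h2 t]
    simp
  have h4 : Function.Exact (torMap N 1 g) ((torZeroEquiv N A).toLinearMap ∘ₗ δ) := by
    intro t
    rw [← h1 t]
    simp
  exact h4.nonempty_equiv_ker h3

lemma nonempty_torModule_equiv_of_subsingleton {f : A →ₗ[R] B} {g : B →ₗ[R] C}
    (hf : Function.Injective f) (hg : Function.Surjective g) (hfg : Function.Exact f g) (i : ℕ)
    [Subsingleton (TorModule R (i + 1) C N)] [Subsingleton (TorModule R i C N)] :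
    Nonempty (TorModule R i A N ≃ₗ[R] TorModule R i B N) := by
  obtain ⟨δ, -, h2⟩ := exists_torDelta N hf hg hfg i
  exact h2.nonempty_equiv (torMap_exact N hf hg hfg i)

variable {x : R} (hx : IsSMulRegular M x)
include hx

lemma exists_torDelta_quotSMulTop (i : ℕ) :
    ∃ (π : TorModule R (i + 1) M N →ₗ[R] TorModule R (i + 1) (QuotSMulTop x M) N)
      (δ : TorModule R (i + 1) (QuotSMulTop x M) N →ₗ[R] TorModule R i M N),
      Function.Exact π δ ∧ Function.Exact δ (LinearMap.lsmul R (TorModule R i M N) x) := by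
  have hfg : Function.Exact (LinearMap.lsmul R M x) (x • (⊤ : Submodule R M)).mkQ := by
    rw [LinearMap.exact_iff, Submodule.ker_mkQ]
    ext y
    simp [Submodule.mem_smul_pointwise_iff_exists]
  obtain ⟨δ, h1, h2⟩ := exists_torDelta N (f := LinearMap.lsmul R M x) hx
    (Submodule.mkQ_surjective _) hfg i
  rw [torMap_lsmul] at h2
  exact ⟨_, δ, h1, h2⟩

lemma subsingleton_torModule_quotSMulTop (i : ℕ) [Subsingleton (TorModule R (i + 1) M N)]
    [Subsingleton (TorModule R i M N)] :
    Subsingleton (TorModule R (i + 1) (QuotSMulTop x M) N) := by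
  obtain ⟨π, δ, h1, -⟩ := exists_torDelta_quotSMulTop N hx i
  exact h1.subsingleton

lemma nonempty_torModule_quotSMulTop_equiv_ker (i : ℕ)
    [Subsingleton (TorModule R (i + 1) M N)] :
    Nonempty (TorModule R (i + 1) (QuotSMulTop x M) N ≃ₗ[R]
      LinearMap.ker (LinearMap.lsmul R (TorModule R i M N) x)) := by
  obtain ⟨π, δ, h1, h2⟩ := exists_torDelta_quotSMulTop N hx i
  exact h1.nonempty_equiv_ker h2

end TorModuleShift

section TorVanishing

variable {R : Type u} [CommRing R]

/-- A syzygy of a module is a cokernel in a projective resolution; its projective dimension drops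
at each step. -/
lemma hasProjectiveDimensionLT_quotient_range {N : ModuleCat.{u} R} (P : ProjectiveResolution N)
    (j n : ℕ) (hN : HasProjectiveDimensionLT N (n + 1 + j)) :
    HasProjectiveDimensionLT (ModuleCat.of R (P.complex.X j ⧸
      LinearMap.range (P.complex.d (j + 1) j).hom)) (n + 1) := by
  induction j generalizing n with
  | zero =>
    have h : Function.Exact (P.complex.d 1 0).hom (P.π.f 0).hom :=
      (ShortComplex.ShortExact.moduleCat_exact_iff_function_exact _).mp P.exact₀
    have hs : Function.Surjective (P.π.f 0).hom :=
      (ModuleCat.epi_iff_surjective _).mp inferInstance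
    have e := (Submodule.quotEquivOfEq _ _ h.linearMap_ker_eq.symm).trans
      ((P.π.f 0).hom.quotKerEquivOfSurjective hs)
    exact hasProjectiveDimensionLT_of_iso (X := N) e.symm.toModuleIso _
  | succ j ih =>
    have h1 := ih (n + 1) (by convert hN using 1; omega)
    set d := (P.complex.d (j + 1) j).hom with hd
    have h : Function.Exact (P.complex.d (j + 2) (j + 1)).hom d :=
      (ShortComplex.ShortExact.moduleCat_exact_iff_function_exact _).mp (P.exact_succ j)
    let S : ShortComplex (ModuleCat.{u} R) := ShortComplex.mk
      (ModuleCat.ofHom (LinearMap.range d).subtype) (ModuleCat.ofHom (LinearMap.range d).mkQ)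
      (by ext x; exact (Submodule.Quotient.mk_eq_zero _).mpr x.2)
    have hS : S.ShortExact :=
      { exact := (ShortComplex.ShortExact.moduleCat_exact_iff_function_exact S).mpr
          (LinearMap.exact_subtype_mkQ _)
        mono_f := (ModuleCat.mono_iff_injective _).mpr (Submodule.subtype_injective _)
        epi_g := (ModuleCat.epi_iff_surjective _).mpr (Submodule.mkQ_surjective _) }
    have h2 : Projective S.X₂ := P.projective j
    have h3 := (hS.hasProjectiveDimensionLT_X₃_iff n h2).mp h1
    have e := (Submodule.quotEquivOfEq _ _ h.linearMap_ker_eq.symm).trans d.quotKerEquivRange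
    exact hasProjectiveDimensionLT_of_iso (X := S.X₁) e.symm.toModuleIso _

lemma lTensor_exact_of_projective {X Y W M : Type u} [AddCommGroup X] [Module R X]
    [AddCommGroup Y] [Module R Y] [AddCommGroup W] [Module R W] [AddCommGroup M] [Module R M]
    {f : X →ₗ[R] Y} {g : Y →ₗ[R] W} (hfg : Function.Exact f g)
    [Module.Projective R (W ⧸ LinearMap.range g)] :
    Function.Exact (f.lTensor M) (g.lTensor M) := by
  obtain ⟨l, hl⟩ : ∃ l : W →ₗ[R] LinearMap.range g, l ∘ₗ (LinearMap.range g).subtype =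
      LinearMap.id := by
    obtain ⟨s, hs⟩ := Module.projective_lifting_property (LinearMap.range g).mkQ LinearMap.id
      (Submodule.mkQ_surjective _)
    have h (w : W) : w - s (Submodule.Quotient.mk w) ∈ LinearMap.range g := by
      rw [← Submodule.Quotient.mk_eq_zero, Submodule.Quotient.mk_sub, sub_eq_zero]
      exact congr($hs (Submodule.Quotient.mk w)).symm
    refine ⟨LinearMap.codRestrict _ (LinearMap.id - s ∘ₗ (LinearMap.range g).mkQ) h, ?_⟩
    refine LinearMap.ext fun w => Subtype.ext ?_
    have : (Submodule.Quotient.mk w.1 : W ⧸ LinearMap.range g) = 0 :=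
      (Submodule.Quotient.mk_eq_zero _).mpr w.2
    change w.1 - s (Submodule.Quotient.mk w.1) = w.1
    rw [this, map_zero, sub_zero]
  have h1 : Function.Exact f g.rangeRestrict := by
    rw [LinearMap.exact_iff, LinearMap.ker_rangeRestrict, hfg.linearMap_ker_eq]
  have h2 := lTensor_exact M h1 g.surjective_rangeRestrict
  have h3 : Function.Injective ((LinearMap.range g).subtype.lTensor M) := by
    refine Function.LeftInverse.injective (g := l.lTensor M) fun t => ?_
    rw [← LinearMap.comp_apply, ← LinearMap.lTensor_comp, hl, LinearMap.lTensor_id]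
    rfl
  have h4 : g.lTensor M = (LinearMap.range g).subtype.lTensor M ∘ₗ g.rangeRestrict.lTensor M := by
    rw [← LinearMap.lTensor_comp]
    rfl
  rw [h4]
  exact h2.comp_injective _ h3 (map_zero _)

lemma subsingleton_torModule_of_hasProjectiveDimensionLT (M N : Type u) [AddCommGroup M]
    [Module R M] [AddCommGroup N] [Module R N] (i : ℕ)
    (hN : HasProjectiveDimensionLT (ModuleCat.of R N) (i + 1)) :
    Subsingleton (TorModule R (i + 1) M N) := by
  set P := projectiveResolution (ModuleCat.of R N) with hP
  have h1 := hasProjectiveDimensionLT_quotient_range P i 0 (by convert hN using 1; omega)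
  have h2 : Module.Projective R (P.complex.X i ⧸ LinearMap.range (P.complex.d (i + 1) i).hom) :=
    (IsProjective.iff_projective _).mpr (projective_iff_hasProjectiveDimensionLT_one |>.mpr h1)
  have h3 := lTensor_exact_of_projective (M := M)
    ((ShortComplex.ShortExact.moduleCat_exact_iff_function_exact _).mp (P.exact_succ i))
  have h4 : ((tensorComplex P.complex).obj (ModuleCat.of R M)).ExactAt (i + 1) := by
    rw [HomologicalComplex.exactAt_iff' _ (i + 2) (i + 1) i (by simp) (by simp)]
    exact (ShortComplex.ShortExact.moduleCat_exact_iff_function_exact _).mpr h3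
  exact ModuleCat.subsingleton_of_isZero h4.isZero_homology

end TorVanishing

section Cutting

/-- The ideal `p` is the annihilator of some element of `T`. -/
def IsElementAnnihilator {R : Type*} [CommRing R] (p : Ideal R) (T : Type*) [AddCommGroup T]
    [Module R T] : Prop :=
  ∃ t : T, ∀ r : R, r • t = 0 ↔ r ∈ p

variable {R : Type u} [CommRing R]

/-- Passing to the quotient of `M` by a regular sequence contained in `p` moves an element with
annihilator `p` to a higher `Tor`. -/
lemma exists_isElementAnnihilator_torModule (p : Ideal R) (N : Type u) [AddCommGroup N]
    [Module R N] (xs : List R) (hp : ∀ x ∈ xs, x ∈ p) (M : Type u) [AddCommGroup M] [Module R M]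
    (hxs : IsWeaklyRegular M xs) (s : ℕ) (hs : ∀ i, s < i → Subsingleton (TorModule R i M N))
    (h : IsElementAnnihilator p (TorModule R s M N)) :
    ∃ (M' : Type u) (_ : AddCommGroup M') (_ : Module R M'),
      IsElementAnnihilator p (TorModule R (s + xs.length) M' N) := by
  induction xs generalizing M s with
  | nil => exact ⟨M, _, _, h⟩
  | cons x xs ih =>
    rw [isWeaklyRegular_cons_iff] at hxs
    have h1 := hs (s + 1) (by omega)
    obtain ⟨e⟩ := nonempty_torModule_quotSMulTop_equiv_ker N hxs.1 s
    obtain ⟨t, ht⟩ := h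
    have hx : x • t = 0 := (ht x).mpr (hp x (by simp))
    have key := ih (fun y hy => hp y (by simp [hy])) (QuotSMulTop x M) hxs.2 (s + 1) (fun i hi => by
      obtain ⟨i, rfl⟩ : ∃ j, i = j + 1 := ⟨i - 1, by omega⟩
      have := hs i (by omega)
      have := hs (i + 1) (by omega)
      exact subsingleton_torModule_quotSMulTop N hxs.1 i) ⟨e.symm ⟨t, hx⟩, fun r => by
        rw [← ht r, ← map_smul, LinearEquiv.map_eq_zero_iff, ← Subtype.coe_inj]
        rfl⟩
    rw [List.length_cons, add_comm xs.length, ← add_assoc]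
    exact key

end Cutting

section BaseChange

/-- Two modules over the ends of a ring homomorphism `φ` are related by a `φ`-semilinear additive
equivalence. -/
def SemilinearlyEquivalent {S T : Type*} [CommRing S] [CommRing T] (φ : S →+* T) (A B : Type*)
    [AddCommGroup A] [AddCommGroup B] [Module S A] [Module T B] : Prop :=
  ∃ e : A ≃+ B, ∀ (s : S) (a : A), e (s • a) = φ s • e a

namespace SemilinearlyEquivalent

variable {S T : Type*} [CommRing S] [CommRing T] {φ : S →+* T} {A A' B B' : Type*}
  [AddCommGroup A] [AddCommGroup B] [Module S A] [Module T B]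
  [AddCommGroup A'] [AddCommGroup B'] [Module S A'] [Module T B']

lemma congr (h : SemilinearlyEquivalent φ A B) (eA : A' ≃ₗ[S] A) (eB : B ≃ₗ[T] B') :
    SemilinearlyEquivalent φ A' B' := by
  obtain ⟨e, he⟩ := h
  exact ⟨(eA.toAddEquiv.trans e).trans eB.toAddEquiv, fun s a => by simp [he]⟩

lemma subsingleton (h : SemilinearlyEquivalent φ A B) [Subsingleton B] : Subsingleton A :=
  h.choose.injective.subsingleton

lemma isElementAnnihilator (h : SemilinearlyEquivalent φ A B) {p : Ideal T}
    (hp : IsElementAnnihilator p B) : IsElementAnnihilator (p.comap φ) A := by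
  obtain ⟨e, he⟩ := h
  obtain ⟨b, hb⟩ := hp
  refine ⟨e.symm b, fun s => ?_⟩
  rw [← e.map_eq_zero_iff, he, e.apply_symm_apply, hb, Ideal.mem_comap]

end SemilinearlyEquivalent

variable {S T : Type u} [CommRing S] [CommRing T] [Algebra S T]

/-- A module is a quotient of a free module. -/
lemma exists_free_cover (S : Type u) [CommRing S] (Z : Type u) [AddCommGroup Z] [Module S Z] :
    ∃ (F : Type u) (_ : AddCommGroup F) (_ : Module S F) (g : F →ₗ[S] Z),
      Module.Free S F ∧ Function.Surjective g :=
  ⟨Z →₀ S, _, _, Finsupp.linearCombination S id, inferInstance,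
    Finsupp.linearCombination_id_surjective S Z⟩

variable (N : Type u) [AddCommGroup N] [Module S N] [Module T N] [IsScalarTower S T N]

/-- The kernel of `K ⊗ N → F ⊗ N` does not depend on whether it is computed over `S` or, after
base change, over `T`. -/
lemma semilinearlyEquivalent_ker_rTensor {K F K' F' : Type u} [AddCommGroup K] [AddCommGroup F]
    [Module S K] [Module S F] [AddCommGroup K'] [AddCommGroup F'] [Module T K'] [Module T F']
    (eK : T ⊗[S] K ≃ₗ[T] K') (eF : T ⊗[S] F ≃ₗ[T] F') (f : K →ₗ[S] F) (f' : K' →ₗ[T] F')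
    (hf : ∀ y, f' (eK (1 ⊗ₜ y)) = eF (1 ⊗ₜ f y)) :
    SemilinearlyEquivalent (algebraMap S T) (LinearMap.ker (f.rTensor N))
      (LinearMap.ker (f'.rTensor N)) := by
  let E (X : Type u) [AddCommGroup X] [Module S X] (X' : Type u) [AddCommGroup X'] [Module T X']
      (e : T ⊗[S] X ≃ₗ[T] X') : X ⊗[S] N ≃+ X' ⊗[T] N :=
    ((TensorProduct.comm S X N).toAddEquiv.trans
      (TensorProduct.AlgebraTensorModule.cancelBaseChange S T T N X).symm.toAddEquiv).trans
      ((TensorProduct.comm T N (T ⊗[S] X)).trans (e.rTensor N)).toAddEquiv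
  have hE (X : Type u) [AddCommGroup X] [Module S X] (X' : Type u) [AddCommGroup X']
      [Module T X'] (e : T ⊗[S] X ≃ₗ[T] X') (y : X) (n : N) :
      E X X' e (y ⊗ₜ n) = (e (1 ⊗ₜ y)) ⊗ₜ n := by
    simp [E]
  have hsmul (s : S) (t : K ⊗[S] N) :
      E K K' eK (s • t) = algebraMap S T s • E K K' eK t := by
    induction t with
    | zero => simp
    | add a b ha hb => simp [ha, hb]
    | tmul y n =>
      rw [← TensorProduct.tmul_smul, hE, hE, ← TensorProduct.tmul_smul, algebraMap_smul]
  have hnat (t : K ⊗[S] N) :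
      E F F' eF (f.rTensor N t) = f'.rTensor N (E K K' eK t) := by
    induction t with
    | zero => simp
    | add a b ha hb => simp [ha, hb]
    | tmul y n => simp [hE, hf]
  refine ⟨⟨⟨fun t => ⟨E K K' eK t, ?_⟩, fun t => ⟨(E K K' eK).symm t, ?_⟩, ?_, ?_⟩, ?_⟩, ?_⟩
  · rw [LinearMap.mem_ker, ← hnat, LinearMap.mem_ker.mp t.2, map_zero]
  · rw [LinearMap.mem_ker, ← (E F F' eF).map_eq_zero_iff, hnat, AddEquiv.apply_symm_apply]
    exact t.2
  · intro t
    simp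
  · intro t
    simp
  · intro a b
    ext
    simp
  · intro s a
    ext
    simpa using hsmul s a

lemma semilinearlyEquivalent_torModule_one {A B C A' B' C' : Type u} [AddCommGroup A]
    [Module S A] [AddCommGroup B] [Module S B] [AddCommGroup C] [Module S C] [Module.Flat S B]
    {f : A →ₗ[S] B} {g : B →ₗ[S] C} (hf : Function.Injective f) (hg : Function.Surjective g)
    (hfg : Function.Exact f g) [AddCommGroup A'] [Module T A'] [AddCommGroup B'] [Module T B']
    [AddCommGroup C'] [Module T C'] [Module.Flat T B'] {f' : A' →ₗ[T] B'} {g' : B' →ₗ[T] C'}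
    (hf' : Function.Injective f') (hg' : Function.Surjective g') (hfg' : Function.Exact f' g')
    (eA : T ⊗[S] A ≃ₗ[T] A') (eB : T ⊗[S] B ≃ₗ[T] B')
    (h : ∀ y, f' (eA (1 ⊗ₜ y)) = eB (1 ⊗ₜ f y)) :
    SemilinearlyEquivalent (algebraMap S T) (TorModule S 1 C N) (TorModule T 1 C' N) := by
  obtain ⟨e⟩ := nonempty_torModule_one_equiv_ker_of_flat N hf hg hfg
  obtain ⟨e'⟩ := nonempty_torModule_one_equiv_ker_of_flat N hf' hg' hfg'
  exact (semilinearlyEquivalent_ker_rTensor N eA eB f f' h).congr e e'.symm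

lemma baseChange_injective_of_subsingleton_torModule_one {A B C : Type u} [AddCommGroup A]
    [Module S A] [AddCommGroup B] [Module S B] [AddCommGroup C] [Module S C] [Module.Flat S B]
    {f : A →ₗ[S] B} {g : B →ₗ[S] C} (hf : Function.Injective f) (hg : Function.Surjective g)
    (hfg : Function.Exact f g) [h : Subsingleton (TorModule S 1 C T)] :
    Function.Injective (f.baseChange T) := by
  obtain ⟨e⟩ := nonempty_torModule_one_equiv_ker_of_flat T hf hg hfg
  have h1 : Subsingleton (LinearMap.ker (f.rTensor T)) := e.symm.injective.subsingleton
  have h2 : Function.Injective (f.rTensor T) := by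
    rw [← LinearMap.ker_eq_bot]
    exact Submodule.subsingleton_iff_eq_bot.mp h1
  exact (LinearMap.lTensor_inj_iff_rTensor_inj T f).mpr h2

/-- Base change for `Tor`, for a module which is `Tor`-independent of the base change. -/
lemma semilinearlyEquivalent_torModule_baseChange (i : ℕ) (Z : Type u) [AddCommGroup Z]
    [Module S Z] (hZ : ∀ j, Subsingleton (TorModule S (j + 1) Z T)) :
    SemilinearlyEquivalent (algebraMap S T) (TorModule S (i + 1) Z N)
      (TorModule T (i + 1) (T ⊗[S] Z) N) := by
  induction i generalizing Z with
  | zero =>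
    obtain ⟨F, _, _, g, _, hg⟩ := exists_free_cover S Z
    have hex := LinearMap.exact_subtype_ker_map g
    have hinj := (LinearMap.ker g).subtype_injective
    have := hZ 0
    exact semilinearlyEquivalent_torModule_one N hinj hg hex (g' := g.baseChange T)
      (baseChange_injective_of_subsingleton_torModule_one (T := T) hinj hg hex)
      (LinearMap.lTensor_surjective T hg) (lTensor_exact T hex hg)
      (LinearEquiv.refl T _) (LinearEquiv.refl T _) (by simp)
  | succ i ih =>
    obtain ⟨F, _, _, g, _, hg⟩ := exists_free_cover S Z
    have hex := LinearMap.exact_subtype_ker_map g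
    have hinj := (LinearMap.ker g).subtype_injective
    have := hZ 0
    obtain ⟨e⟩ := nonempty_torModule_succ_succ_equiv_of_flat N hinj hg hex i
    obtain ⟨e'⟩ := nonempty_torModule_succ_succ_equiv_of_flat N (g := g.baseChange T)
      (baseChange_injective_of_subsingleton_torModule_one (T := T) hinj hg hex)
      (LinearMap.lTensor_surjective T hg) (lTensor_exact T hex hg) i
    refine (ih (LinearMap.ker g) fun j => ?_).congr e e'.symm
    obtain ⟨e''⟩ := nonempty_torModule_succ_succ_equiv_of_flat T hinj hg hex j
    have := hZ (j + 1)
    exact e''.symm.injective.subsingleton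

end BaseChange

section QuotientByRegularElement

variable {S T : Type u} [CommRing S] [CommRing T] [Algebra S T]
  (hsurj : Function.Surjective (algebraMap S T))
include hsurj

lemma exists_eq_one_tmul {Z : Type u} [AddCommGroup Z] [Module S Z] (t : T ⊗[S] Z) :
    ∃ z : Z, t = 1 ⊗ₜ z := by
  induction t with
  | zero => exact ⟨0, by simp⟩
  | add a b ha hb =>
    obtain ⟨z, rfl⟩ := ha
    obtain ⟨w, rfl⟩ := hb
    exact ⟨z + w, by rw [TensorProduct.tmul_add]⟩
  | tmul a z =>
    obtain ⟨s, rfl⟩ := hsurj a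
    exact ⟨s • z, by rw [Algebra.algebraMap_eq_smul_one, TensorProduct.smul_tmul]⟩

variable {x : S} (hker : RingHom.ker (algebraMap S T) = Ideal.span {x})
include hker

lemma exists_eq_smul_of_one_tmul_eq_zero {Z : Type u} [AddCommGroup Z] [Module S Z] (z : Z)
    (hz : (1 : T) ⊗ₜ[S] z = 0) : ∃ w : Z, z = x • w := by
  have h : Function.Exact (LinearMap.lsmul S S x) (Algebra.linearMap S T) := by
    intro s
    rw [Algebra.linearMap_apply, ← RingHom.mem_ker, hker, Ideal.mem_span_singleton']
    simp [mul_comm]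
  obtain ⟨u, hu⟩ := (rTensor_exact Z h hsurj (1 ⊗ₜ z)).mp (by simpa using hz)
  refine ⟨TensorProduct.lid S Z u, ?_⟩
  have h2 : (LinearMap.lsmul S S x).rTensor Z u = x • u := by
    have : (LinearMap.lsmul S S x) = x • LinearMap.id := rfl
    rw [this, LinearMap.rTensor_smul, LinearMap.rTensor_id]
    rfl
  rw [h2] at hu
  simpa using congr(TensorProduct.lid S Z $hu).symm

variable (hx : IsSMulRegular S x)
include hx

/-- A quotient by a regular element is `Tor`-independent of the modules on which it is regular. -/
lemma subsingleton_torModule_succ_of_isSMulRegular (j : ℕ) (Z : Type u) [AddCommGroup Z]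
    [Module S Z] (hZ : IsSMulRegular Z x) : Subsingleton (TorModule S (j + 1) Z T) := by
  induction j generalizing Z with
  | zero =>
    obtain ⟨F, _, _, g, _, hg⟩ := exists_free_cover S Z
    have hex := LinearMap.exact_subtype_ker_map g
    have hinj := (LinearMap.ker g).subtype_injective
    obtain ⟨e⟩ := nonempty_torModule_one_equiv_ker_of_flat T hinj hg hex
    have h : Function.Injective ((LinearMap.ker g).subtype.lTensor T) := by
      rw [injective_iff_map_eq_zero]
      intro t ht
      obtain ⟨k, rfl⟩ := exists_eq_one_tmul hsurj t
      rw [LinearMap.lTensor_tmul] at ht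
      obtain ⟨w, hw⟩ := exists_eq_smul_of_one_tmul_eq_zero hsurj hker _ ht
      have hgw : g w = 0 := hZ (by
        change x • g w = x • 0
        rw [← map_smul, ← hw, smul_zero]
        exact k.2)
      have : k = x • (⟨w, hgw⟩ : LinearMap.ker g) := Subtype.ext hw
      have hx0 : algebraMap S T x = 0 := by
        rw [← RingHom.mem_ker, hker]
        exact Ideal.mem_span_singleton_self x
      rw [this, ← TensorProduct.smul_tmul, ← Algebra.algebraMap_eq_smul_one, hx0,
        TensorProduct.zero_tmul]
    rw [LinearMap.lTensor_inj_iff_rTensor_inj, ← LinearMap.ker_eq_bot] at h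
    have := Submodule.subsingleton_iff_eq_bot.mpr h
    exact e.injective.subsingleton
  | succ j ih =>
    obtain ⟨F, _, _, g, _, hg⟩ := exists_free_cover S Z
    have hex := LinearMap.exact_subtype_ker_map g
    have hinj := (LinearMap.ker g).subtype_injective
    have hF : IsSMulRegular F x := Module.Flat.isSMulRegular_of_isRegular
      (isLeftRegular_iff_isRegular.mp hx)
    obtain ⟨e⟩ := nonempty_torModule_succ_succ_equiv_of_flat T hinj hg hex j
    have := ih (LinearMap.ker g) (hF.submodule _ _)
    exact e.injective.subsingleton

end QuotientByRegularElement

section ChangeOfRingsStep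

variable {S T : Type u} [CommRing S] [CommRing T] [Algebra S T]
  (hsurj : Function.Surjective (algebraMap S T))
  {x : S} (hker : RingHom.ker (algebraMap S T) = Ideal.span {x}) (hx : IsSMulRegular S x)
include hsurj hker hx

/-- A module over `T = S / x` embeds in the base change of its first `S`-syzygy, with its first
`T`-syzygy as cokernel. -/
lemma exists_exact_baseChange_ker {M : Type u} [AddCommGroup M] [Module S M] [Module T M]
    [IsScalarTower S T M] {P : Type u} [AddCommGroup P] [Module S P] [Module.Flat S P]
    {g : P →ₗ[S] M} (hg : Function.Surjective g) :
    ∃ (j : M →ₗ[T] T ⊗[S] LinearMap.ker g)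
      (b : T ⊗[S] LinearMap.ker g →ₗ[T] LinearMap.ker (g.liftBaseChange T)),
      Function.Injective j ∧ Function.Surjective b ∧ Function.Exact j b := by
  have hx0 : algebraMap S T x = 0 := by
    rw [← RingHom.mem_ker, hker]
    exact Ideal.mem_span_singleton_self x
  have hxM (m : M) : x • m = 0 := by rw [← algebraMap_smul T, hx0, zero_smul]
  have hx1 (z : LinearMap.ker g) : (1 : T) ⊗ₜ[S] (x • z) = 0 := by
    rw [← TensorProduct.smul_tmul, ← Algebra.algebraMap_eq_smul_one, hx0, TensorProduct.zero_tmul]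
  have hP : IsSMulRegular P x := Module.Flat.isSMulRegular_of_isRegular
    (isLeftRegular_iff_isRegular.mp hx)
  let φ : P →ₗ[S] LinearMap.ker g := LinearMap.codRestrict _ (LinearMap.lsmul S P x) fun p => by
    simp [hxM]
  obtain ⟨j, hj⟩ : ∃ j : M →ₗ[T] T ⊗[S] LinearMap.ker g, ∀ p, j (g p) = 1 ⊗ₜ φ p := by
    have h : LinearMap.ker g ≤ LinearMap.ker (TensorProduct.mk S T (LinearMap.ker g) 1 ∘ₗ φ) := by
      intro z hz
      exact hx1 ⟨z, hz⟩
    refine ⟨LinearMap.extendScalarsOfSurjective hsurj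
      ((LinearMap.ker g).liftQ _ h ∘ₗ (g.quotKerEquivOfSurjective hg).symm.toLinearMap), fun p => ?_⟩
    have : (g.quotKerEquivOfSurjective hg).symm (g p) = Submodule.Quotient.mk p := by
      rw [LinearEquiv.symm_apply_eq]
      rfl
    simp [this]
  let b : T ⊗[S] LinearMap.ker g →ₗ[T] LinearMap.ker (g.liftBaseChange T) :=
    LinearMap.codRestrict _ ((LinearMap.ker g).subtype.baseChange T) fun t => by
      obtain ⟨z, rfl⟩ := exists_eq_one_tmul hsurj t
      simp
  refine ⟨j, b, ?_, ?_, ?_⟩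
  · rw [injective_iff_map_eq_zero]
    intro m hm
    obtain ⟨p, rfl⟩ := hg m
    rw [hj] at hm
    obtain ⟨w, hw⟩ := exists_eq_smul_of_one_tmul_eq_zero hsurj hker _ hm
    have : p = w := hP congr(($hw : P))
    rw [this]
    exact w.2
  · rintro ⟨y, hy⟩
    obtain ⟨p, rfl⟩ := exists_eq_one_tmul hsurj y
    have hp : g p = 0 := by simpa using hy
    exact ⟨1 ⊗ₜ ⟨p, hp⟩, Subtype.ext (by simp [b])⟩
  · intro t
    obtain ⟨z, rfl⟩ := exists_eq_one_tmul hsurj t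
    constructor
    · intro h
      have h1 : (1 : T) ⊗ₜ[S] (z : P) = 0 := by simpa [b] using congr(($h : T ⊗[S] P))
      obtain ⟨p, hp⟩ := exists_eq_smul_of_one_tmul_eq_zero hsurj hker _ h1
      refine ⟨g p, ?_⟩
      rw [hj]
      congr 1
      exact Subtype.ext hp.symm
    · rintro ⟨m, hm⟩
      obtain ⟨p, rfl⟩ := hg m
      rw [← hm, hj]
      refine Subtype.ext ?_
      change (1 : T) ⊗ₜ[S] (x • p) = 0
      rw [← TensorProduct.smul_tmul, ← Algebra.algebraMap_eq_smul_one, hx0,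
        TensorProduct.zero_tmul]

/-- The top nonvanishing `Tor` is shifted by one under a change of rings along a quotient by a
regular element. -/
lemma torModule_change_of_rings (M N : Type u) [AddCommGroup M] [Module S M] [Module T M]
    [IsScalarTower S T M] [AddCommGroup N] [Module S N] [Module T N] [IsScalarTower S T N] (q : ℕ)
    (hq : ∀ i, q + 1 < i → Subsingleton (TorModule T i M N)) :
    (∀ i, q + 2 < i → Subsingleton (TorModule S i M N)) ∧
      SemilinearlyEquivalent (algebraMap S T) (TorModule S (q + 2) M N)
        (TorModule T (q + 1) M N) := by
  obtain ⟨P, _, _, g, _, hg⟩ := exists_free_cover S M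
  obtain ⟨j, b, hj, hb, hjb⟩ := exists_exact_baseChange_ker hsurj hker hx (M := M) hg
  have hP : IsSMulRegular P x := Module.Flat.isSMulRegular_of_isRegular
    (isLeftRegular_iff_isRegular.mp hx)
  have hg' : Function.Surjective (g.liftBaseChange T) := fun m => by
    obtain ⟨p, rfl⟩ := hg m
    exact ⟨1 ⊗ₜ p, by simp⟩
  have h (i : ℕ) : SemilinearlyEquivalent (algebraMap S T) (TorModule S (i + 2) M N)
      (TorModule T (i + 1) (T ⊗[S] LinearMap.ker g) N) := by
    obtain ⟨e⟩ := nonempty_torModule_succ_succ_equiv_of_flat N (LinearMap.ker g).subtype_injective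
      hg (LinearMap.exact_subtype_ker_map g) i
    exact (semilinearlyEquivalent_torModule_baseChange N i (LinearMap.ker g) fun k =>
      subsingleton_torModule_succ_of_isSMulRegular hsurj hker hx k _
        (hP.submodule _ _)).congr e (LinearEquiv.refl _ _)
  have h1 (i : ℕ) (hi : q ≤ i) :
      Subsingleton (TorModule T (i + 1) (LinearMap.ker (g.liftBaseChange T)) N) := by
    obtain ⟨e⟩ := nonempty_torModule_succ_succ_equiv_of_flat N
      (LinearMap.ker (g.liftBaseChange T)).subtype_injective
      hg' (LinearMap.exact_subtype_ker_map _) i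
    have := hq (i + 2) (by omega)
    exact e.symm.injective.subsingleton
  constructor
  · intro i hi
    obtain ⟨i, rfl⟩ : ∃ k, i = k + 2 := ⟨i - 2, by omega⟩
    have := h1 i (by omega)
    have := hq (i + 1) (by omega)
    have := (torMap_exact N (C := LinearMap.ker (g.liftBaseChange T)) hj hb hjb (i + 1)).subsingleton
    exact (h i).subsingleton
  · have := h1 q le_rfl
    have := h1 (q + 1) (by omega)
    obtain ⟨e⟩ := nonempty_torModule_equiv_of_subsingleton N
      (C := LinearMap.ker (g.liftBaseChange T))
      hj hb hjb (q + 1)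
    exact (h q).congr (LinearEquiv.refl _ _) e.symm

end ChangeOfRingsStep

section ChangeOfRings

lemma SemilinearlyEquivalent.trans {S T U : Type*} [CommRing S] [CommRing T] [CommRing U]
    {φ : S →+* T} {ψ : T →+* U} {A B C : Type*} [AddCommGroup A] [AddCommGroup B] [AddCommGroup C]
    [Module S A] [Module T B] [Module U C] (h : SemilinearlyEquivalent φ A B)
    (h' : SemilinearlyEquivalent ψ B C) : SemilinearlyEquivalent (ψ.comp φ) A C := by
  obtain ⟨e, he⟩ := h
  obtain ⟨e', he'⟩ := h'
  exact ⟨e.trans e', fun s a => by simp [he, he']⟩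

/-- A linear equivalence in the first variable induces one on `Tor`. -/
noncomputable def torModuleCongr {R : Type u} [CommRing R] {M M' : Type u} [AddCommGroup M]
    [Module R M] [AddCommGroup M'] [Module R M'] (N : Type u) [AddCommGroup N] [Module R N] (i : ℕ)
    (e : M ≃ₗ[R] M') : TorModule R i M N ≃ₗ[R] TorModule R i M' N :=
  ((torFunctor (ModuleCat.of R N) i).mapIso e.toModuleIso).toLinearEquiv

lemma semilinearlyEquivalent_torModule_of_bijective {S T : Type u} [CommRing S] [CommRing T]
    [Algebra S T] (h : Function.Bijective (algebraMap S T)) (M N : Type u)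
    [AddCommGroup M] [Module S M] [Module T M] [IsScalarTower S T M]
    [AddCommGroup N] [Module S N] [Module T N] [IsScalarTower S T N] (i : ℕ) :
    SemilinearlyEquivalent (algebraMap S T) (TorModule S (i + 1) M N)
      (TorModule T (i + 1) M N) := by
  have e : T ⊗[S] M ≃ₗ[T] M := by
    refine LinearEquiv.ofBijective ((LinearMap.id : M →ₗ[S] M).liftBaseChange T) ⟨?_, ?_⟩
    · rw [injective_iff_map_eq_zero]
      intro t ht
      obtain ⟨m, rfl⟩ := exists_eq_one_tmul h.2 t
      have hm : m = 0 := by simpa using ht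
      rw [hm, TensorProduct.tmul_zero]
    · exact fun m => ⟨1 ⊗ₜ m, by simp⟩
  have hproj : Module.Projective S T :=
    Module.Projective.of_equiv (LinearEquiv.ofBijective (Algebra.linearMap S T) h)
  have hpd : HasProjectiveDimensionLT (ModuleCat.of S T) 1 :=
    projective_iff_hasProjectiveDimensionLT_one.mp
      ((IsProjective.iff_projective (ModuleCat.of S T)).mp hproj)
  exact (semilinearlyEquivalent_torModule_baseChange N i M fun j =>
    subsingleton_torModule_of_hasProjectiveDimensionLT M T j
      (hasProjectiveDimensionLT_of_ge _ 1 _ (by omega))).congr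
    (LinearEquiv.refl _ _) (torModuleCongr N (i + 1) e)

/-- The top nonvanishing `Tor` is shifted by `c` under a change of rings along a quotient by a
regular sequence of length `c`. -/
theorem torModule_change_of_rings_of_isWeaklyRegular (c : ℕ) :
    ∀ (S T : Type u) [CommRing S] [CommRing T] [Algebra S T]
    (_ : Function.Surjective (algebraMap S T)) (f : List S) (_ : f.length = c)
    (_ : RingHom.ker (algebraMap S T) = Ideal.ofList f) (_ : IsWeaklyRegular S f)
    (M N : Type u) [AddCommGroup M] [Module S M] [Module T M] [IsScalarTower S T M]
    [AddCommGroup N] [Module S N] [Module T N] [IsScalarTower S T N] (q : ℕ)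
    (_ : ∀ i, q + 1 < i → Subsingleton (TorModule T i M N)),
    (∀ i, q + c + 1 < i → Subsingleton (TorModule S i M N)) ∧
      SemilinearlyEquivalent (algebraMap S T) (TorModule S (q + c + 1) M N)
        (TorModule T (q + 1) M N) := by
  induction c with
  | zero =>
    intro S T _ _ _ hsurj f hlen hker hf M N _ _ _ _ _ _ _ _ q hq
    obtain rfl := List.length_eq_zero_iff.mp hlen
    have hbij : Function.Bijective (algebraMap S T) :=
      ⟨(RingHom.injective_iff_ker_eq_bot _).mpr (by simpa using hker), hsurj⟩
    refine ⟨fun i hi => ?_, semilinearlyEquivalent_torModule_of_bijective hbij M N q⟩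
    obtain ⟨i, rfl⟩ : ∃ k, i = k + 1 := ⟨i - 1, by omega⟩
    have := hq (i + 1) (by omega)
    exact (semilinearlyEquivalent_torModule_of_bijective hbij M N i).subsingleton
  | succ c ih =>
    intro S T _ _ _ hsurj f hlen hker hf M N _ _ _ _ _ _ _ _ q hq
    obtain ⟨x, f, rfl⟩ := List.exists_cons_of_length_eq_add_one hlen
    rw [isWeaklyRegular_cons_iff] at hf
    have hx0 : Ideal.span {x} ≤ RingHom.ker (algebraMap S T) := by
      rw [hker, Ideal.ofList_cons]
      exact le_sup_left
    let S' := S ⧸ Ideal.span {x}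
    let φ : S' →+* T := Ideal.Quotient.lift _ (algebraMap S T) fun s hs => hx0 hs
    let _ : Algebra S' T := φ.toAlgebra
    let _ : Module S' M := Module.compHom M φ
    let _ : Module S' N := Module.compHom N φ
    have : IsScalarTower S' T M := ⟨fun a b m => mul_smul (φ a) b m⟩
    have : IsScalarTower S' T N := ⟨fun a b m => mul_smul (φ a) b m⟩
    have : IsScalarTower S S' M := .of_algebraMap_smul fun r m => algebraMap_smul T r m
    have : IsScalarTower S S' N := .of_algebraMap_smul fun r m => algebraMap_smul T r m
    have hcomp : (algebraMap S' T).comp (algebraMap S S') = algebraMap S T := by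
      ext s
      rfl
    have hsurj' : Function.Surjective (algebraMap S S') := Ideal.Quotient.mk_surjective
    have hker' : RingHom.ker (algebraMap S S') = Ideal.span {x} := Ideal.mk_ker
    have hkerφ : RingHom.ker (algebraMap S' T) = Ideal.ofList (f.map (algebraMap S S')) := by
      apply Ideal.comap_injective_of_surjective _ hsurj'
      rw [RingHom.comap_ker, hcomp, hker, ← Ideal.map_ofList,
        Ideal.comap_map_of_surjective' _ hsurj', hker', Ideal.ofList_cons, sup_comm]
    have hf' : IsWeaklyRegular S' (f.map (algebraMap S S')) := by
      rw [isWeaklyRegular_map_algebraMap_iff]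
      have e : QuotSMulTop x S ≃ₗ[S] S' :=
        Submodule.quotEquivOfEq _ _ (by rw [← Submodule.ideal_span_singleton_smul]; simp)
      exact (e.isWeaklyRegular_congr _).mp hf.2
    obtain ⟨h1, h2⟩ := ih S' T (fun t => by
      obtain ⟨s, rfl⟩ := hsurj t
      exact ⟨algebraMap S S' s, rfl⟩) _ (by simpa using hlen) hkerφ hf' M N q hq
    obtain ⟨h3, h4⟩ := torModule_change_of_rings hsurj' hker' hf.1 M N (q + c) h1
    exact ⟨h3, hcomp ▸ h4.trans h2⟩

end ChangeOfRings

/-- A Cohen–Macaulay module over a Noetherian local ring admits a regular sequence of length the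
dimension of the module. -/
lemma exists_isRegular_of_moduleDepth_eq_moduleDim {R : Type u} [CommRing R] [IsLocalRing R]
    [IsNoetherianRing R] {M : Type u} [AddCommGroup M] [Module R M] [Nontrivial M]
    (h : (moduleDepth R M : WithBot ℕ∞) = moduleDim R M) :
    ∃ rs : List R, moduleDim R M = rs.length ∧ (∀ r ∈ rs, r ∈ maximalIdeal R) ∧
      IsRegular M rs := by
  have hle : moduleDim R M < ⊤ := (ringKrullDim_quotient_le _).trans_lt ringKrullDim_lt_top
  rw [← h] at hle ⊢
  have : Nonempty {n : ℕ∞ | ∃ rs : List R, n = (rs.length : ℕ∞) ∧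
      (∀ x ∈ rs, x ∈ IsLocalRing.maximalIdeal R) ∧ RingTheory.Sequence.IsRegular M rs} :=
    ⟨0, [], by simp, by simp, IsRegular.nil R M⟩
  have hmem : moduleDepth R M ∈ {n : ℕ∞ | ∃ rs : List R, n = (rs.length : ℕ∞) ∧
      (∀ x ∈ rs, x ∈ IsLocalRing.maximalIdeal R) ∧ RingTheory.Sequence.IsRegular M rs} :=
    ENat.sSup_mem_of_nonempty_of_lt_top (WithBot.coe_lt_coe.mp hle)
  obtain ⟨rs, hlen, hrs⟩ := hmem
  exact ⟨rs, by rw [hlen]; rfl, hrs⟩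

/-- Regular sequences lift along surjections of local rings. -/
lemma exists_isRegular_of_surjective {Q R : Type u} [CommRing Q] [IsLocalRing Q] [CommRing R]
    [IsLocalRing R] [Algebra Q R] (hsurj : Function.Surjective (algebraMap Q R)) {M : Type u}
    [AddCommGroup M] [Module R M] [Module Q M] [IsScalarTower Q R M] [Nontrivial M]
    [Module.Finite Q M] {rs : List R} (hmem : ∀ r ∈ rs, r ∈ maximalIdeal R)
    (hrs : IsRegular M rs) :
    ∃ rs' : List Q, rs'.length = rs.length ∧ (∀ r ∈ rs', r ∈ maximalIdeal Q) ∧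
      IsRegular M rs' := by
  obtain ⟨rs', rfl⟩ := List.map_surjective_iff.mpr hsurj rs
  have : IsLocalHom (algebraMap Q R) := IsLocalHom.of_surjective _ hsurj
  have hmem' : ∀ r ∈ rs', r ∈ maximalIdeal Q := fun r hr => by
    simpa using hmem _ (List.mem_map_of_mem hr)
  refine ⟨rs', by simp, hmem', ?_⟩
  rw [IsLocalRing.isRegular_iff_isWeaklyRegular_of_subset_maximalIdeal hmem',
    ← isWeaklyRegular_map_algebraMap_iff R M rs']
  exact hrs.toIsWeaklyRegular

section Annihilator

variable {R : Type u} [CommRing R] (M N : Type u) [AddCommGroup M] [Module R M] [AddCommGroup N]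
  [Module R N]

lemma annihilator_left_le_annihilator_torModule (i : ℕ) :
    Module.annihilator R M ≤ Module.annihilator R (TorModule R i M N) := by
  intro r hr
  rw [Module.mem_annihilator] at hr ⊢
  have h0 : LinearMap.lsmul R M r = LinearMap.lsmul R M 0 := by
    ext m
    simp [hr m]
  intro t
  have h1 := torMap_lsmul (M := M) N i r
  rw [h0, torMap_lsmul] at h1
  exact congr($h1.symm t).trans (zero_smul R t)

lemma annihilator_right_le_annihilator_torModule (i : ℕ) :
    Module.annihilator R N ≤ Module.annihilator R (TorModule R (i + 1) M N) := by
  induction i generalizing M with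
  | zero =>
    obtain ⟨F, _, _, g, _, hg⟩ := exists_free_cover R M
    obtain ⟨e⟩ := nonempty_torModule_one_equiv_ker_of_flat N (LinearMap.ker g).subtype_injective hg
      (LinearMap.exact_subtype_ker_map g)
    rw [e.annihilator_eq]
    intro r hr
    rw [Module.mem_annihilator] at hr ⊢
    rintro ⟨t, ht⟩
    ext
    change r • t = 0
    clear ht
    induction t with
    | zero => simp
    | tmul x y => rw [← TensorProduct.tmul_smul, hr, TensorProduct.tmul_zero]
    | add x y hx hy => rw [smul_add, hx, hy, add_zero]
  | succ i ih =>
    obtain ⟨F, _, _, g, _, hg⟩ := exists_free_cover R M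
    obtain ⟨e⟩ := nonempty_torModule_succ_succ_equiv_of_flat N (LinearMap.ker g).subtype_injective
      hg (LinearMap.exact_subtype_ker_map g) i
    rw [e.annihilator_eq]
    exact ih _

/-- The support of a tensor product contains the intersection of the supports. -/
lemma annihilator_tensorProduct_le_of_isPrime [Module.Finite R M] [Module.Finite R N]
    (p : Ideal R) [hp : p.IsPrime] (hM : Module.annihilator R M ≤ p)
    (hN : Module.annihilator R N ≤ p) : Module.annihilator R (M ⊗[R] N) ≤ p := by
  let P : PrimeSpectrum R := ⟨p, hp⟩
  have hM' := (Module.mem_support_iff_nontrivial_residueField_tensorProduct P).mp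
    (Module.mem_support_iff_of_finite.mpr hM : P ∈ Module.support R M)
  have hN' := (Module.mem_support_iff_nontrivial_residueField_tensorProduct P).mp
    (Module.mem_support_iff_of_finite.mpr hN : P ∈ Module.support R N)
  suffices h : P ∈ Module.support R (M ⊗[R] N) from Module.mem_support_iff_of_finite.mp h
  refine (Module.mem_support_iff_nontrivial_residueField_tensorProduct P).mpr ?_
  rw [(TensorProduct.AlgebraTensorModule.distribBaseChange R p.ResidueField M N).nontrivial_congr]
  exact inferInstanceAs (Nontrivial ((P.asIdeal.ResidueField ⊗[R] M) ⊗[P.asIdeal.ResidueField]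
    (P.asIdeal.ResidueField ⊗[R] N)))

end Annihilator

/-- Over a regular local ring `Q` with a complete intersection quotient `R`, primes that are
annihilators of elements of the last nonvanishing `Tor` of `M` and `N` have large dimension. -/
lemma not_isElementAnnihilator_torModule_of_regular {Q R : Type u} [CommRing Q] [IsLocalRing Q]
    [IsNoetherianRing Q] [CommRing R] [Algebra Q R]
    (hsurj : Function.Surjective (algebraMap Q R)) {s : Finset Q}
    (hs : Ideal.span (s : Set Q) = maximalIdeal Q) (hd : (s.card : WithBot ℕ∞) ≤ ringKrullDim Q)
    {f : List Q} (hker : RingHom.ker (algebraMap Q R) = Ideal.ofList f) (hf : IsWeaklyRegular Q f)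
    (M N : Type u) [AddCommGroup M] [Module R M] [Module Q M] [IsScalarTower Q R M]
    [AddCommGroup N] [Module R N] [Module Q N] [IsScalarTower Q R N]
    [Module.Finite Q M] [Module.Finite Q N] [Nontrivial N]
    {xs ys : List Q} (hxs : ∀ r ∈ xs, r ∈ maximalIdeal Q) (hxM : IsRegular M xs)
    (hys : ∀ r ∈ ys, r ∈ maximalIdeal Q) (hyN : IsWeaklyRegular N ys)
    (p : Ideal R) [p.IsPrime] {t : ℕ} (ht : ringKrullDim (R ⧸ p) ≤ t) (htx : t ≤ xs.length)
    (hle : t + s.card ≤ f.length + xs.length + ys.length) {q : ℕ}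
    (hq : ∀ i, q + 1 < i → Subsingleton (TorModule R i M N)) :
    ¬ IsElementAnnihilator p (TorModule R (q + 1) M N) := by
  intro hp
  obtain ⟨hvan, hequiv⟩ := torModule_change_of_rings_of_isWeaklyRegular f.length Q R hsurj f rfl
    hker hf M N q hq
  have hdim : ringKrullDim (Q ⧸ p.comap (algebraMap Q R)) ≤ t :=
    (ringKrullDim_eq_of_ringEquiv (RingEquiv.ofBijective (Ideal.quotientMap p (algebraMap Q R)
      le_rfl) ⟨Ideal.quotientMap_injective, Ideal.quotientMap_surjective hsurj⟩)).trans_le ht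
  obtain ⟨zs, hlen, hzp, hzM⟩ := exists_isWeaklyRegular_mem_of_ringKrullDim_quotient_le
    (p.comap (algebraMap Q R)) t hdim (xs.length - t) M xs hxM hxs (by omega)
  obtain ⟨M', _, _, w, hw⟩ := exists_isElementAnnihilator_torModule (p.comap (algebraMap Q R)) N zs
    hzp M hzM (q + f.length + 1) hvan (hequiv.isElementAnnihilator hp)
  have hpd := projectiveDimension_add_length_le s.card s hs le_rfl hd N ys hyN hys
  have hpd' : HasProjectiveDimensionLE (ModuleCat.of Q N) (q + f.length + zs.length) := by
    rw [← projectiveDimension_le_iff, ← ENat.WithBot.add_le_add_natCast_right_iff (c := ys.length)]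
    refine hpd.trans ?_
    norm_cast
    omega
  have hsub := subsingleton_torModule_of_hasProjectiveDimensionLT M' N (q + f.length + zs.length)
    hpd'
  rw [show q + f.length + zs.length + 1 = q + f.length + 1 + zs.length by omega] at hsub
  exact (p.comap (algebraMap Q R)).one_notMem ((hw 1).mp (Subsingleton.elim _ _))

lemma exists_ringKrullDim_eq_natCast (A : Type*) [CommRing A] [FiniteRingKrullDim A] :
    ∃ n : ℕ, ringKrullDim A = n := by
  obtain ⟨a, ha⟩ := WithBot.ne_bot_iff_exists.mp (ringKrullDim_ne_bot (R := A))
  obtain ⟨n, hn⟩ := ENat.ne_top_iff_exists.mp fun h : a = ⊤ =>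
    ringKrullDim_ne_top (R := A) (by rw [← ha, h]; rfl)
  exact ⟨n, by rw [← ha, ← hn]; rfl⟩

theorem stmt_6 (Q : Type u) [CommRing Q] [IsLocalRing Q] (hQ : IsRegularLocal Q)
    (f : List Q) (hf : RingTheory.Sequence.IsRegular Q f)
    [IsLocalRing (Q ⧸ Ideal.ofList f)]
    (M N : Type u) [AddCommGroup M] [Module (Q ⧸ Ideal.ofList f) M]
    [AddCommGroup N] [Module (Q ⧸ Ideal.ofList f) N]
    [Module.Finite (Q ⧸ Ideal.ofList f) M] [Module.Finite (Q ⧸ Ideal.ofList f) N]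
    [Nontrivial M] [Nontrivial N]
    (hCM_M : (moduleDepth (Q ⧸ Ideal.ofList f) M : WithBot ℕ∞) =
      moduleDim (Q ⧸ Ideal.ofList f) M)
    (hCM_N : (moduleDepth (Q ⧸ Ideal.ofList f) N : WithBot ℕ∞) =
      moduleDim (Q ⧸ Ideal.ofList f) N)
    (htor : ∃ n : ℕ, ∀ i : ℕ, n ≤ i →
      IsZero (((Tor (ModuleCat.{u} (Q ⧸ Ideal.ofList f)) i).obj
        (ModuleCat.of (Q ⧸ Ideal.ofList f) M)).obj (ModuleCat.of (Q ⧸ Ideal.ofList f) N)))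
    (hdim : moduleDim (Q ⧸ Ideal.ofList f) (M ⊗[Q ⧸ Ideal.ofList f] N) +
        ringDim (Q ⧸ Ideal.ofList f) ≤
      moduleDim (Q ⧸ Ideal.ofList f) M + moduleDim (Q ⧸ Ideal.ofList f) N) :
    ∀ i : ℕ, 0 < i →
      IsZero (((Tor (ModuleCat.{u} (Q ⧸ Ideal.ofList f)) i).obj
        (ModuleCat.of (Q ⧸ Ideal.ofList f) M)).obj (ModuleCat.of (Q ⧸ Ideal.ofList f) N)) := by
  obtain ⟨_, s, hs, hcard⟩ := hQ
  let R := Q ⧸ Ideal.ofList f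
  let _ : Module Q M := Module.compHom M (algebraMap Q R)
  let _ : Module Q N := Module.compHom N (algebraMap Q R)
  have : IsScalarTower Q R M := .of_algebraMap_smul fun _ _ => rfl
  have : IsScalarTower Q R N := .of_algebraMap_smul fun _ _ => rfl
  have hsurj : Function.Surjective (algebraMap Q R) := Ideal.Quotient.mk_surjective
  have : Module.Finite Q R := Module.Finite.of_surjective (Algebra.linearMap Q R) hsurj
  have : Module.Finite Q M := Module.Finite.trans R M
  have : Module.Finite Q N := Module.Finite.trans R N
  obtain ⟨xs, hdimM, hxs, hxM⟩ := exists_isRegular_of_moduleDepth_eq_moduleDim hCM_M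
  obtain ⟨ys, hdimN, hys, hyN⟩ := exists_isRegular_of_moduleDepth_eq_moduleDim hCM_N
  obtain ⟨xs', hlenx, hxs', hxM'⟩ := exists_isRegular_of_surjective hsurj hxs hxM
  obtain ⟨ys', hleny, hys', hyN'⟩ := exists_isRegular_of_surjective hsurj hys hyN
  have hiff (i : ℕ) : IsZero (((Tor (ModuleCat.{u} R) i).obj (ModuleCat.of R M)).obj
      (ModuleCat.of R N)) ↔ Subsingleton (TorModule R i M N) :=
    (torFunctorObjIso (ModuleCat.of R M) (ModuleCat.of R N) i).isZero_iff.trans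
      ⟨fun h => ModuleCat.subsingleton_of_isZero h, fun h => ModuleCat.isZero_of_subsingleton _⟩
  by_contra! hcon
  obtain ⟨i₀, hi₀, hne₀⟩ := hcon
  obtain ⟨n, hn⟩ := htor
  have hex : ∃ q, (∀ i, q + 1 < i → Subsingleton (TorModule R i M N)) ∧
      Nontrivial (TorModule R (q + 1) M N) := by
    classical
    have hP : ∃ k, ∀ i, k < i → Subsingleton (TorModule R i M N) :=
      ⟨n, fun i hi => (hiff i).mp (hn i hi.le)⟩
    have hpos : Nat.find hP ≠ 0 := fun h0 =>
      hne₀ ((hiff i₀).mpr (Nat.find_spec hP i₀ (by omega)))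
    obtain ⟨q, hq⟩ := Nat.exists_eq_succ_of_ne_zero hpos
    refine ⟨q, fun i hi => Nat.find_spec hP i (by omega), ?_⟩
    rw [← not_subsingleton_iff_nontrivial]
    intro hsub
    refine Nat.find_min hP (m := q) (by omega) fun i hi => ?_
    obtain rfl | hlt := (Nat.succ_le_of_lt hi).eq_or_lt
    · exact hsub
    · exact Nat.find_spec hP i (by omega)
  obtain ⟨q, hq, hnontriv⟩ := hex
  obtain ⟨p, hp⟩ := associatedPrimes.nonempty R (TorModule R (q + 1) M N)
  obtain ⟨hprime, w, hw⟩ := isAssociatedPrime_iff.mp hp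
  have hpT : IsElementAnnihilator p (TorModule R (q + 1) M N) :=
    ⟨w, fun r => by rw [hw, Submodule.mem_colon_singleton, Submodule.mem_bot]⟩
  have hann : Module.annihilator R (TorModule R (q + 1) M N) ≤ p := fun r hr => by
    rw [hw, Submodule.mem_colon_singleton, Submodule.mem_bot]
    exact Module.mem_annihilator.mp hr w
  have hannT : Module.annihilator R (M ⊗[R] N) ≤ p :=
    annihilator_tensorProduct_le_of_isPrime M N p
      ((annihilator_left_le_annihilator_torModule M N _).trans hann)
      ((annihilator_right_le_annihilator_torModule M N _).trans hann)
  have : IsLocalRing (R ⧸ p) := .of_surjective' (Ideal.Quotient.mk p) Ideal.Quotient.mk_surjective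
  obtain ⟨t, ht⟩ : ∃ t : ℕ, ringKrullDim (R ⧸ p) = t := exists_ringKrullDim_eq_natCast _
  obtain ⟨e, he⟩ : ∃ e : ℕ, ringKrullDim R = e := exists_ringKrullDim_eq_natCast _
  have htT : ringKrullDim (R ⧸ p) ≤ moduleDim R (M ⊗[R] N) :=
    ringKrullDim_le_of_surjective (Ideal.Quotient.factor hannT)
      (Ideal.Quotient.factor_surjective hannT)
  have hsum : t + e ≤ xs.length + ys.length := by
    have h := (add_le_add_left htT (ringKrullDim R)).trans hdim
    rw [ht, he, hdimM, hdimN] at h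
    exact_mod_cast h
  have hyse : ys.length ≤ e := by
    have h : moduleDim R N ≤ ringKrullDim R := ringKrullDim_quotient_le _
    rw [hdimN, he] at h
    exact_mod_cast h
  have hec : e + f.length = s.card := by
    have h := ringKrullDim_add_length_eq_ringKrullDim_of_isRegular f hf
    rw [← hcard, he] at h
    exact_mod_cast h
  exact not_isElementAnnihilator_torModule_of_regular hsurj hs hcard.le Ideal.mk_ker
    hf.toIsWeaklyRegular M N hxs' hxM' hys' hyN'.toIsWeaklyRegular p ht.le (by omega) (by omega) hq
    hpT
end
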